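/- arXiv:2512.01614 — 3 statements merged into one kernel-verified Lean document; each statement's English description precedes it below -/
import Mathlib

section
/- Let q ≥ 3 be an integer, let G be a graph in A(q) with maximum degree t ≥ q+2, and let f and g be two different proper t-edge-colorings of G. Assume the subgraph G(f,g,t) contains a component C which is a cycle whose edges are colored (under f) with at least q+2 colors and all of whose vertices have degree t in G, and assume there is a t-alternating path P in G (with respect to f) satisfying: C and P have exactly one common vertex, which is the terminus of P; the origin of P has degree less than t in G; and if P has odd length, then the color t is missing at the origin of P under f. Then there is a proper t-edge-coloring f̄ of G such that f̄ is (q+1)-equivalent to f, M(f̄,t) and M(f,t) differ only on C, and |M(f̄,t) ∩ M(g,t)| > |M(f,t) ∩ M(g,t)|. -/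
/-!
The edges of the cycle `C` lie alternately in the color classes `T = M(f,t)` and `M(g,t)`, so
exchanging on `C` turns `T` into a matching `T △ C` that has more edges in common with `M(g,t)`.
The task is to make `T △ C` the class `t` of a coloring `(q + 1)`-equivalent to `f`, although `C`
may meet many color classes. The exchange is therefore done two edges at a time.

An intermediate state (`Near`, `Hole`) is a matching `T` leaving one vertex `y` uncovered, together
with a coloring `E` equivalent to `f` in which `T` lies in the union of `q` color classes, `t` among
them, such that every uncovered vertex other than `y` misses one of these `q` colors. Given edges
`yw ∉ T` and `ww' ∈ T`, add the class of `yw` to the `q` classes and delete `yw`. Every vertex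
uncovered by `T` then has at most `q` edges in the union of these `q + 1` classes, and every other
vertex has at most `q` edges there outside `T`. As `G ∈ 𝒜(q)`, these classes can be recolored so
that `T` is exactly the class `t` (`recolor`). Now `y` misses `t` and `w` misses some color `x`, so
`yw` can be put back by recoloring `q` of the classes, including those of `t` and `x`
(`Near.extend`). Replacing `ww'` by `yw` in `T` moves the uncovered vertex from `y` to `w'`
(`Near.slide`).

If `P` has odd length, its origin `a` is uncovered by `T`. The uncovered vertex is moved along `P`
to the terminus `b`, around `C`, and back along `P` to `a`. The changes on `P` cancel and those on
`C` remain (`Hole.lollipop`). Since `a` has degree less than `t`, it misses some color, and one more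
recoloring of `q + 1` classes makes `T △ C` a color class (`Near.finish`). If `P` has even length,
its first edge has color `t`. It is taken out of `T`, the same process starts at its second
endpoint, and at the end the edge is put back (`Near.close`).
-/

open SimpleGraph Set

namespace EdgeTrans

universe u v

variable {V : Type*} {W : Type*}

/-- The degree of a vertex. -/
noncomputable def deg (G : SimpleGraph V) (x : V) : ℕ :=
  (G.neighborSet x).ncard

/-- The maximum degree `Δ(G)`. -/
noncomputable def maxDeg (G : SimpleGraph V) : ℕ :=
  ⨆ x, deg G x

/-- A proper `t`-edge-coloring of `G`, using the colors `1, …, t`. -/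
def IsProperEdgeColoring (G : SimpleGraph V) (t : ℕ) (f : Sym2 V → ℕ) : Prop :=
  (∀ e ∈ G.edgeSet, f e ∈ Finset.Icc 1 t) ∧
  ∀ e₁ ∈ G.edgeSet, ∀ e₂ ∈ G.edgeSet, e₁ ≠ e₂ → (∃ x, x ∈ e₁ ∧ x ∈ e₂) → f e₁ ≠ f e₂

/-- The color class `M(f, j)`: the set of edges of `G` colored `j` by `f`. -/
def colorClass (G : SimpleGraph V) (f : Sym2 V → ℕ) (j : ℕ) : Set (Sym2 V) :=
  {e | e ∈ G.edgeSet ∧ f e = j}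

/-- `f` and `g` differ by at most `n` color classes. -/
def DifferAtMost (G : SimpleGraph V) (n : ℕ) (f g : Sym2 V → ℕ) : Prop :=
  {j : ℕ | colorClass G f j ≠ colorClass G g j}.ncard ≤ n

/-- `f` and `g` are `n`-equivalent proper `t`-edge-colorings: one can be transformed into the
other by a sequence of proper `t`-edge-colorings in which consecutive colorings differ by at
most `n` color classes. -/
def NEquiv (G : SimpleGraph V) (t n : ℕ) (f g : Sym2 V → ℕ) : Prop :=
  ∃ (k : ℕ) (F : ℕ → Sym2 V → ℕ), 1 ≤ k ∧ F 0 = f ∧ F k = g ∧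
    (∀ i ≤ k, IsProperEdgeColoring G t (F i)) ∧
    ∀ i < k, DifferAtMost G n (F i) (F (i + 1))

/-- The chromatic index `χ'(G)`. -/
noncomputable def chromIdx (G : SimpleGraph V) : ℕ :=
  sInf {t | ∃ f, IsProperEdgeColoring G t f}

/-- The edge chromatic transformation index `χ'_trans(G)`: the minimum `n ≥ 2` such that any
two proper `χ'(G)`-edge-colorings of `G` are `n`-equivalent. -/
noncomputable def transIdx (G : SimpleGraph V) : ℕ :=
  sInf {n | 2 ≤ n ∧ ∀ f g, IsProperEdgeColoring G (chromIdx G) f →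
      IsProperEdgeColoring G (chromIdx G) g → NEquiv G (chromIdx G) n f g}

/-- `v` is a cutvertex of `G`: some two other vertices are connected in `G`, but every walk
between them passes through `v`. -/
def IsCutVertex (G : SimpleGraph V) (x : V) : Prop :=
  ∃ a b : V, a ≠ x ∧ b ≠ x ∧ G.Reachable a b ∧ ∀ p : G.Walk a b, x ∈ p.support

/-- A block of `G`: a maximal connected subgraph without a cutvertex of the subgraph. -/
def IsBlock (G : SimpleGraph V) (B : G.Subgraph) : Prop :=
  B.coe.Connected ∧ (∀ x, ¬ IsCutVertex B.coe x) ∧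
    ∀ B' : G.Subgraph, B ≤ B' → B'.coe.Connected →
      (∀ x, ¬ IsCutVertex B'.coe x) → B' = B

/-- Membership in the class `𝒜(q)`: every subgraph `H` of `G` with `Δ(H) ≤ q` has a proper
`q`-edge-coloring. -/
def MemA (q : ℕ) (G : SimpleGraph V) : Prop :=
  ∀ H : SimpleGraph V, H ≤ G → maxDeg H ≤ q → ∃ f, IsProperEdgeColoring H q f

/-- `G` is `k`-degenerate: every (nonempty) subgraph of `G` contains a vertex of degree
at most `k` in the subgraph. -/
def Degenerate (k : ℕ) (G : SimpleGraph V) : Prop :=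
  ∀ H : G.Subgraph, H.verts.Nonempty → ∃ x ∈ H.verts, (H.neighborSet x).ncard ≤ k

/-- `G` has `H` as a minor (via branch sets). -/
def HasMinor (G : SimpleGraph V) (H : SimpleGraph W) : Prop :=
  ∃ F : W → Set V,
    (∀ w, (G.induce (F w)).Connected) ∧
    (∀ w₁ w₂, w₁ ≠ w₂ → Disjoint (F w₁) (F w₂)) ∧
    (∀ w₁ w₂, H.Adj w₁ w₂ → ∃ v₁ ∈ F w₁, ∃ v₂ ∈ F w₂, G.Adj v₁ v₂)

/-- Planarity, via Wagner's characterization: no `K₅` minor and no `K₃,₃` minor. -/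
def Planar (G : SimpleGraph V) : Prop :=
  ¬ HasMinor G (completeGraph (Fin 5)) ∧
  ¬ HasMinor G (completeBipartiteGraph (Fin 3) (Fin 3))

/-- Series-parallel: no `K₄` minor. -/
def SeriesParallel (G : SimpleGraph V) : Prop :=
  ¬ HasMinor G (completeGraph (Fin 4))

/-- `G` is chordless: in every cycle, any two nonconsecutive vertices are non-adjacent,
i.e. every edge of `G` joining two vertices of a cycle is an edge of the cycle. -/
def Chordless (G : SimpleGraph V) : Prop :=
  ∀ (x : V) (c : G.Walk x x), c.IsCycle →
    ∀ a ∈ c.support, ∀ b ∈ c.support, G.Adj a b → s(a, b) ∈ c.edges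

/-- The wheel graph with hub `none` and cycle `ZMod n`. -/
def wheelGraph (n : ℕ) : SimpleGraph (Option (ZMod n)) :=
  SimpleGraph.fromRel (fun a b =>
    a = none ∨ ∃ i : ZMod n, a = some i ∧ b = some (i + 1))

/-- `G` is a wheel graph. -/
def IsWheel (G : SimpleGraph V) : Prop :=
  ∃ n : ℕ, 3 ≤ n ∧ Nonempty (G ≃g wheelGraph n)

/-- `G` is a Halin graph: `G` is planar and is the edge-disjoint union of a spanning tree `T`
on at least four vertices having no vertex of degree two, and a cycle through exactly the
leaves of `T`. -/
def IsHalin (G : SimpleGraph V) : Prop :=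
  Planar G ∧ 4 ≤ Nat.card V ∧
  ∃ T : SimpleGraph V, T ≤ G ∧ T.IsTree ∧ (∀ x : V, deg T x ≠ 2) ∧
    ∃ (x₀ : V) (c : G.Walk x₀ x₀), c.IsCycle ∧
      (∀ e : Sym2 V, e ∈ c.edges ↔ e ∈ G.edgeSet \ T.edgeSet) ∧
      (∀ u : V, u ∈ c.support ↔ deg T u = 1)

/-- The subgraph `G(f,g,t)`: the (spanning) subgraph of `G` with edge set
`M(f,t) △ M(g,t)`. -/
def diffGraph (G : SimpleGraph V) (t : ℕ) (f g : Sym2 V → ℕ) : SimpleGraph V :=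
  SimpleGraph.fromEdgeSet (symmDiff (colorClass G f t) (colorClass G g t))

/-- The walk `p` (a path or a cycle) is an entire connected component of its ambient graph:
every edge incident with a vertex of `p` is an edge of `p`. -/
def IsComponentWalk {G : SimpleGraph V} {u x : V} (p : G.Walk u x) : Prop :=
  ∀ a ∈ p.support, ∀ b, G.Adj a b → s(a, b) ∈ p.edges

/-- The color `i` is missing at `x` under `f`. -/
def MissingAt (G : SimpleGraph V) (f : Sym2 V → ℕ) (i : ℕ) (x : V) : Prop :=
  ∀ e ∈ G.edgeSet, x ∈ e → f e ≠ i

/-- The path `p` is alternately colored with colors `a` and `b` under `f`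
(an `(a,b)`-colored path). -/
def AltColored (f : Sym2 V → ℕ) (a b : ℕ) {G : SimpleGraph V} {u x : V}
    (p : G.Walk u x) : Prop :=
  (∀ i : Fin p.edges.length, f (p.edges.get i) = if Even i.1 then a else b) ∨
  (∀ i : Fin p.edges.length, f (p.edges.get i) = if Even i.1 then b else a)

/-- The path `p` is `t`-alternating: of any two consecutive edges, one is colored `t`. -/
def AltPath (f : Sym2 V → ℕ) (t : ℕ) {G : SimpleGraph V} {u x : V}
    (p : G.Walk u x) : Prop :=
  ∀ (i : ℕ) (h : i + 1 < p.edges.length),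
    f (p.edges.get ⟨i, Nat.lt_of_succ_lt h⟩) = t ∨ f (p.edges.get ⟨i + 1, h⟩) = t

/-- The cycle `c` is `t`-alternating: of any two (cyclically) consecutive edges, one is
colored `t`. -/
def IsAltCycle (f : Sym2 V → ℕ) (t : ℕ) {G : SimpleGraph V} {u : V}
    (c : G.Walk u u) : Prop :=
  ∀ i : Fin c.edges.length,
    f (c.edges.get i) = t ∨
    f (c.edges.get ⟨(i.1 + 1) % c.edges.length, Nat.mod_lt _ i.pos⟩) = t

/-- `G` is 2-connected. -/
def TwoConnected (G : SimpleGraph V) : Prop :=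
  G.Connected ∧ 3 ≤ Nat.card V ∧ ∀ x, ¬ IsCutVertex G x

/-- The union of the cycle `c` and the ears `P j` for `j < i`, as a subgraph. -/
noncomputable def earPrefix {G : SimpleGraph V} {v₀ : V} (c : G.Walk v₀ v₀) {n : ℕ}
    {x y : Fin n → V} (P : ∀ i : Fin n, G.Walk (x i) (y i)) (i : ℕ) : G.Subgraph :=
  c.toSubgraph ⊔ ⨆ j : Fin n, ⨆ _ : (j : ℕ) < i, (P j).toSubgraph

/-- `c, P 0, …, P (n-1)` is a `t`-alternating ear decomposition with respect to the cycle `c`: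
`c` is a `t`-alternating cycle, and each `P i` is a `(cᵢ, t)`-colored path (`cᵢ ≤ t - 1`) which
is an ear of `c ∪ P 0 ∪ … ∪ P i`, i.e. its endpoints lie in the previous part and its internal
vertices have degree 2 in `c ∪ P 0 ∪ … ∪ P i`. -/
def IsEarDecomp (G : SimpleGraph V) (f : Sym2 V → ℕ) (t : ℕ) {v₀ : V} (c : G.Walk v₀ v₀)
    (n : ℕ) (x y : Fin n → V) (P : ∀ i : Fin n, G.Walk (x i) (y i)) : Prop :=
  c.IsCycle ∧ IsAltCycle f t c ∧
  ∀ i : Fin n,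
    (P i).IsPath ∧ 1 ≤ (P i).length ∧
    (∃ ci : ℕ, ci ≤ t - 1 ∧ AltColored f ci t (P i)) ∧
    x i ∈ (earPrefix c P (i : ℕ)).verts ∧ y i ∈ (earPrefix c P (i : ℕ)).verts ∧
    ∀ a ∈ (P i).support, a ≠ x i → a ≠ y i →
      ((earPrefix c P ((i : ℕ) + 1)).neighborSet a).ncard = 2

/-- The line graph of `G`. -/
def lineGr (G : SimpleGraph V) : SimpleGraph G.edgeSet :=
  SimpleGraph.fromRel (fun e₁ e₂ => ∃ x, x ∈ (e₁ : Sym2 V) ∧ x ∈ (e₂ : Sym2 V))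

/-- The clique number (in `ℕ∞`). -/
noncomputable def cliqueNumE (G : SimpleGraph V) : ℕ∞ :=
  sSup {n : ℕ∞ | ∃ (m : ℕ) (s : Finset V), n = (m : ℕ∞) ∧ G.IsNClique m s}

/-- `G` is a perfect graph: every induced subgraph has chromatic number equal to its
clique number. -/
def IsPerfect (G : SimpleGraph V) : Prop :=
  ∀ s : Set V, (G.induce s).chromaticNumber = cliqueNumE (G.induce s)

/-- A partition of the vertex set of `G` into `n` cliques, each of size `sz`. -/
def IsCliquePartition (G : SimpleGraph V) (n sz : ℕ) (P : Set (Set V)) : Prop :=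
  P.ncard = n ∧ (∀ s ∈ P, G.IsClique s ∧ s.ncard = sz) ∧
  ⋃₀ P = Set.univ ∧ P.Pairwise fun s₁ s₂ => Disjoint s₁ s₂

/-- A proper vertex `n`-coloring of `G`, viewed as a partition of the vertex set into `n`
independent sets (color classes). -/
def IsIndepPartition (G : SimpleGraph V) (n : ℕ) (P : Set (Set V)) : Prop :=
  P.ncard = n ∧ (∀ s ∈ P, ∀ a ∈ s, ∀ b ∈ s, ¬ G.Adj a b) ∧
  ⋃₀ P = Set.univ ∧ P.Pairwise fun s₁ s₂ => Disjoint s₁ s₂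

/-- The graph `H(p,n)`: vertex classes `V_1, …, V_{2n}` of size `p` (indexed here by
`ZMod (2n)`), with two vertices adjacent iff they lie in the same class or in (cyclically)
consecutive classes. -/
def Hgraph (p n : ℕ) : SimpleGraph (ZMod (2 * n) × Fin p) :=
  SimpleGraph.fromRel (fun a b => a.1 = b.1 ∨ a.1 + 1 = b.1)

/-- The clique partition `{C_1, …, C_n}` of `H(p,n)`, `C_i = V_{2i-1} ∪ V_{2i}`. -/
def Cpart (p n : ℕ) : Set (Set (ZMod (2 * n) × Fin p)) :=
  {s | ∃ i : Fin n, s = {x | x.1 = ((2 * (i : ℕ) : ℕ) : ZMod (2 * n)) ∨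
      x.1 = ((2 * (i : ℕ) + 1 : ℕ) : ZMod (2 * n))}}

/-- The clique partition `{R_1, …, R_n}` of `H(p,n)`, `R_1 = V_{2n} ∪ V_1` and
`R_i = V_{2i-2} ∪ V_{2i-1}`. -/
def Rpart (p n : ℕ) : Set (Set (ZMod (2 * n) × Fin p)) :=
  {s | ∃ i : Fin n, s = {x | x.1 = ((2 * (i : ℕ) : ℕ) : ZMod (2 * n)) - 1 ∨
      x.1 = ((2 * (i : ℕ) : ℕ) : ZMod (2 * n))}}

/-- A multigraph on vertices `α` with edges `β`: each edge has two distinct endpoints. -/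
structure Multigraph (α : Type u) (β : Type v) where
  ends : β → Sym2 α
  not_isDiag : ∀ e, ¬ (ends e).IsDiag

namespace Multigraph

variable {α : Type u} {β : Type v}

/-- A proper `t`-edge-coloring of a multigraph, with colors `1, …, t`. -/
def IsProper (G : Multigraph α β) (t : ℕ) (f : β → ℕ) : Prop :=
  (∀ e, f e ∈ Finset.Icc 1 t) ∧
  ∀ e₁ e₂ : β, e₁ ≠ e₂ → (∃ x, x ∈ G.ends e₁ ∧ x ∈ G.ends e₂) → f e₁ ≠ f e₂

/-- The color class `M(f,j)` of a multigraph edge coloring. -/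
def mColorClass (f : β → ℕ) (j : ℕ) : Set β := {e | f e = j}

/-- `f` and `g` differ by at most `n` color classes. -/
def MDifferAtMost (n : ℕ) (f g : β → ℕ) : Prop :=
  {j : ℕ | mColorClass f j ≠ mColorClass g j}.ncard ≤ n

/-- `n`-equivalence of proper `t`-edge-colorings of a multigraph. -/
def MNEquiv (G : Multigraph α β) (t n : ℕ) (f g : β → ℕ) : Prop :=
  ∃ (k : ℕ) (F : ℕ → β → ℕ), 1 ≤ k ∧ F 0 = f ∧ F k = g ∧
    (∀ i ≤ k, G.IsProper t (F i)) ∧ ∀ i < k, MDifferAtMost n (F i) (F (i + 1))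

/-- The chromatic index of a multigraph. -/
noncomputable def mChromIdx (G : Multigraph α β) : ℕ :=
  sInf {t | ∃ f, G.IsProper t f}

/-- The edge chromatic transformation index of a multigraph. -/
noncomputable def mTransIdx (G : Multigraph α β) : ℕ :=
  sInf {n | 2 ≤ n ∧ ∀ f g, G.IsProper G.mChromIdx f → G.IsProper G.mChromIdx g →
      G.MNEquiv G.mChromIdx n f g}

/-- The degree of a vertex in a multigraph. -/
noncomputable def mDeg (G : Multigraph α β) (x : α) : ℕ := {e | x ∈ G.ends e}.ncard

/-- The underlying simple graph of a multigraph. -/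
def toSimple (G : Multigraph α β) : SimpleGraph α :=
  SimpleGraph.fromEdgeSet (Set.range G.ends)

end Multigraph

/-! ### Proper colorings of sets of edges -/

/-- `h` is a proper coloring of the set of edges `S`: distinct edges of `S` sharing an endpoint
get distinct colors. No bound is put on the colors. -/
def ProperOn (S : Set (Sym2 V)) (h : Sym2 V → ℕ) : Prop :=
  ∀ e₁ ∈ S, ∀ e₂ ∈ S, e₁ ≠ e₂ → (∃ x, x ∈ e₁ ∧ x ∈ e₂) → h e₁ ≠ h e₂

/-- The edges of `S` incident with the vertex `z`. -/
def starAt (S : Set (Sym2 V)) (z : V) : Set (Sym2 V) := {e | e ∈ S ∧ z ∈ e}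

/-- The edges in `T` are pairwise disjoint. -/
def MatchingSet (T : Set (Sym2 V)) : Prop :=
  ∀ e₁ ∈ T, ∀ e₂ ∈ T, (∃ x, x ∈ e₁ ∧ x ∈ e₂) → e₁ = e₂

/-- No edge of `T` is incident with `z`. -/
def Uncovered (T : Set (Sym2 V)) (z : V) : Prop := ∀ e ∈ T, z ∉ e

theorem starAt_ncard_le {S : Set (Sym2 V)} {h : Sym2 V → ℕ} (hP : ProperOn S h) {z : V}
    (K : Finset ℕ) (hK : ∀ e ∈ S, z ∈ e → h e ∈ K) : (starAt S z).ncard ≤ K.card := by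
  rw [← Set.ncard_coe_finset K]
  refine Set.ncard_le_ncard_of_injOn h (fun e he => hK e he.1 he.2) ?_ (Finset.finite_toSet K)
  intro e₁ h₁ e₂ h₂ he
  by_contra hne
  exact hP e₁ h₁.1 e₂ h₂.1 hne ⟨z, h₁.2, h₂.2⟩ he

/-- If fewer than `#K` edges of `S` meet `z`, some color of `K` is not used on them. -/
theorem exists_missing [Fintype V] {S : Set (Sym2 V)} (h : Sym2 V → ℕ) {z : V} {K : Finset ℕ}
    (hlt : (starAt S z).ncard < K.card) : ∃ m ∈ K, ∀ e ∈ S, z ∈ e → h e ≠ m := by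
  classical
  by_contra! hcon
  have hsub : (K : Set ℕ) ⊆ h '' starAt S z := by
    intro m hm
    obtain ⟨e, he, hz, rfl⟩ := hcon m hm
    exact ⟨e, ⟨he, hz⟩, rfl⟩
  have h1 := Set.ncard_le_ncard hsub (Set.toFinite _)
  rw [Set.ncard_coe_finset] at h1
  have h2 := Set.ncard_image_le (f := h) (Set.toFinite (starAt S z))
  omega

theorem starAt_ncard_erase [Fintype V] {S : Set (Sym2 V)} {e : Sym2 V} {z : V} {n : ℕ}
    (he : e ∈ S) (hz : z ∈ e) (hS : (starAt S z).ncard ≤ n + 1) :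
    (starAt (S \ {e}) z).ncard ≤ n := by
  have h1 : starAt (S \ {e}) z = starAt S z \ {e} := by
    ext x; simp only [starAt, Set.mem_sdiff, Set.mem_ofPred_eq]; tauto
  rw [h1, Set.ncard_sdiff_singleton_of_mem (show e ∈ starAt S z from ⟨he, hz⟩)]
  omega

theorem starAt_mono_ncard [Fintype V] {S S' : Set (Sym2 V)} (h : S ⊆ S') (z : V) :
    (starAt S z).ncard ≤ (starAt S' z).ncard :=
  Set.ncard_le_ncard (fun _ he => ⟨h he.1, he.2⟩) (Set.toFinite _)

/-- In a graph of `𝒜(q)`, any set of edges with at most `q` of them at each vertex can be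
properly colored with any prescribed `q` colors. -/
theorem MemA.exists_coloring [Fintype V] {q : ℕ} {G : SimpleGraph V} (hA : MemA q G)
    {S : Set (Sym2 V)} (hS : S ⊆ G.edgeSet) (hdeg : ∀ z, (starAt S z).ncard ≤ q)
    {K : Finset ℕ} (hK : K.card = q) : ∃ h, ProperOn S h ∧ ∀ e ∈ S, h e ∈ K := by
  classical
  have hedge : (SimpleGraph.fromEdgeSet S).edgeSet = S := by
    rw [SimpleGraph.edgeSet_fromEdgeSet]
    ext e
    exact ⟨fun h => h.1, fun h => ⟨h, G.not_isDiag_of_mem_edgeSet (hS h)⟩⟩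
  have hle : SimpleGraph.fromEdgeSet S ≤ G := by
    rw [← SimpleGraph.edgeSet_subset_edgeSet, hedge]; exact hS
  have hmax : maxDeg (SimpleGraph.fromEdgeSet S) ≤ q := by
    refine ciSup_le' fun z => le_trans ?_ (hdeg z)
    refine Set.ncard_le_ncard_of_injOn (fun w => s(z, w)) ?_ ?_ (Set.toFinite _)
    · intro w hw
      rw [SimpleGraph.mem_neighborSet, SimpleGraph.fromEdgeSet_adj] at hw
      exact ⟨hw.1, by simp⟩
    · intro w _ w' _ h
      exact Sym2.congr_right.1 h
  obtain ⟨k, hk1, hk2⟩ := hA _ hle hmax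
  rw [hedge] at hk1 hk2
  let φ : ℕ → ℕ := fun i => if hi : i - 1 < q then K.orderEmbOfFin hK ⟨i - 1, hi⟩ else 0
  have hφ : ∀ i ∈ Finset.Icc 1 q, ∃ hi : i - 1 < q, φ i = K.orderEmbOfFin hK ⟨i - 1, hi⟩ := by
    intro i hi
    rw [Finset.mem_Icc] at hi
    have hi' : i - 1 < q := by omega
    exact ⟨hi', by simp [φ, hi']⟩
  refine ⟨fun e => φ (k e), ?_, ?_⟩
  · intro e₁ h₁ e₂ h₂ hne hx heq
    obtain ⟨a1, b1⟩ := hφ _ (hk1 e₁ h₁)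
    obtain ⟨a2, b2⟩ := hφ _ (hk1 e₂ h₂)
    have c1 := Finset.mem_Icc.1 (hk1 e₁ h₁)
    have c2 := Finset.mem_Icc.1 (hk1 e₂ h₂)
    simp only [b1, b2] at heq
    have := (K.orderEmbOfFin hK).injective heq
    rw [Fin.mk.injEq] at this
    exact hk2 e₁ h₁ e₂ h₂ hne hx (by omega)
  · intro e he
    obtain ⟨a1, b1⟩ := hφ _ (hk1 e he)
    simp only [b1]
    exact K.orderEmbOfFin_mem hK _

theorem IsProperEdgeColoring.matchingSet {G : SimpleGraph V} {t : ℕ} {f : Sym2 V → ℕ}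
    (hf : IsProperEdgeColoring G t f) (j : ℕ) : MatchingSet (colorClass G f j) := by
  intro e₁ h₁ e₂ h₂ hx
  by_contra hne
  exact hf.2 e₁ h₁.1 e₂ h₂.1 hne hx (h₁.2.trans h₂.2.symm)

/-- A vertex of degree less than `t` misses a color. -/
theorem exists_missingAt [Fintype V] {G : SimpleGraph V} {t : ℕ} (f : Sym2 V → ℕ)
    {y : V} (hy : deg G y < t) :
    ∃ m ∈ Finset.Icc 1 t, MissingAt G f m y := by
  have hlt : (starAt G.edgeSet y).ncard < (Finset.Icc 1 t).card := by
    rw [Nat.card_Icc, Nat.add_sub_cancel]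
    refine lt_of_le_of_lt ?_ hy
    have : starAt G.edgeSet y ⊆ (fun w => s(y, w)) '' G.neighborSet y := by
      rintro e ⟨he, hye⟩
      obtain ⟨w, rfl⟩ := hye
      exact ⟨w, he, rfl⟩
    exact (Set.ncard_le_ncard this (Set.toFinite _)).trans (Set.ncard_image_le (Set.toFinite _))
  exact exists_missing f hlt

/-! ### Equivalence of colorings -/

theorem NEquiv.refl {G : SimpleGraph V} {t n : ℕ} {f : Sym2 V → ℕ}
    (hf : IsProperEdgeColoring G t f) : NEquiv G t n f f :=
  ⟨1, fun _ => f, le_rfl, rfl, rfl, fun _ _ => hf, fun _ _ => by simp [DifferAtMost]⟩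

/-- Recoloring inside a set `D` of at most `n` colors is one step of an `n`-equivalence. -/
theorem NEquiv.step {G : SimpleGraph V} {t n : ℕ} {E' E f : Sym2 V → ℕ} (D : Finset ℕ)
    (hD : D.card ≤ n) (hE' : IsProperEdgeColoring G t E')
    (hsame : ∀ e ∈ G.edgeSet, E' e = E e ∨ (E' e ∈ D ∧ E e ∈ D))
    (h : NEquiv G t n E f) : NEquiv G t n E' f := by
  obtain ⟨k, F, -, h0, hk, hp, hd⟩ := h
  refine ⟨k + 1, fun i => if i = 0 then E' else F (i - 1), by omega, by simp, by simpa using hk,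
    ?_, ?_⟩
  · intro i hi
    by_cases h : i = 0
    · simpa [h] using hE'
    · simpa [h] using hp (i - 1) (by omega)
  · intro i hi
    by_cases h : i = 0
    · subst h
      simp only [if_true, zero_add, one_ne_zero, if_false, Nat.sub_self, h0]
      refine le_trans ?_ hD
      rw [← Set.ncard_coe_finset D]
      refine Set.ncard_le_ncard ?_ (Finset.finite_toSet D)
      intro j hj
      by_contra hjD
      refine hj ?_
      ext e
      simp only [colorClass, Set.mem_ofPred_eq]
      refine and_congr_right fun he => ?_
      rcases hsame e he with h1 | ⟨h1, h2⟩
      · rw [h1]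
      · have hjD' : j ∉ D := hjD
        constructor
        · rintro rfl; exact absurd h1 hjD'
        · rintro rfl; exact absurd h2 hjD'
    · have := hd (i - 1) (by omega)
      rw [show i - 1 + 1 = i by omega] at this
      simpa [h] using this

/-! ### Moving an uncovered vertex of the class `t` -/

/-- The edges of `G` whose color under `E` lies in `D`. -/
def colored (G : SimpleGraph V) (E : Sym2 V → ℕ) (D : Finset ℕ) : Set (Sym2 V) :=
  {e | e ∈ G.edgeSet ∧ E e ∈ D}

/-- Recolor a union of `q + 1` color classes, minus a set `B` of edges to be left uncolored, so
that a prescribed matching `T` becomes the class `t`. This is possible as soon as every vertex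
that is uncovered by `T` misses one of the `q + 1` colors or is an endpoint of an edge of `B`:
then what is left after the removal of `T` and `B` has at most `q` edges at each vertex. -/
theorem recolor [Fintype V] {q t : ℕ} {G : SimpleGraph V} (hA : MemA q G)
    {E : Sym2 V → ℕ} (hE : IsProperEdgeColoring G t E) {D : Finset ℕ} (hDt : D ⊆ Finset.Icc 1 t)
    (hDc : D.card = q + 1) (htD : t ∈ D) {T : Set (Sym2 V)} (hT : MatchingSet T)
    (hTL : T ⊆ colored G E D) {B : Set (Sym2 V)} (hB : B ⊆ colored G E D)
    (hunc : ∀ z, Uncovered T z →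
      (∃ e ∈ B, z ∈ e) ∨ ∃ m ∈ D, MissingAt G E m z) :
    ∃ h : Sym2 V → ℕ, ProperOn (G.edgeSet \ B) h ∧
      (∀ e ∈ G.edgeSet \ B, h e ∈ Finset.Icc 1 t) ∧
      (∀ e ∈ G.edgeSet \ B, h e = t ↔ e ∈ T) ∧
      (∀ e ∈ G.edgeSet \ B, h e = E e ∨ (h e ∈ D ∧ E e ∈ D)) := by
  classical
  have hPL : ProperOn (colored G E D) E := fun e₁ h₁ e₂ h₂ => hE.2 e₁ h₁.1 e₂ h₂.1
  obtain ⟨k, hk1, hk2⟩ := hA.exists_coloring (S := (colored G E D \ T) \ B)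
    (K := D.erase t) (fun e he => he.1.1.1) (by
      intro z
      have hle := starAt_ncard_le hPL (z := z) D (fun e he _ => he.2)
      rw [hDc] at hle
      by_cases hz : Uncovered T z
      · rcases hunc z hz with ⟨e, he, hze⟩ | ⟨m, hm, hmz⟩
        · refine (starAt_mono_ncard ?_ z).trans (starAt_ncard_erase (hB he) hze hle)
          rintro x ⟨⟨hx1, -⟩, hx2⟩
          exact ⟨hx1, by rintro rfl; exact hx2 he⟩
        · have h1 := starAt_ncard_le hPL (z := z) (D.erase m) (fun e he hze =>
            Finset.mem_erase.2 ⟨hmz e he.1 hze, he.2⟩)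
          rw [Finset.card_erase_of_mem hm, hDc] at h1
          exact (starAt_mono_ncard (fun x hx => hx.1.1) z).trans h1
      · obtain ⟨e, he, hze⟩ : ∃ e ∈ T, z ∈ e := by
          simpa [Uncovered] using hz
        refine (starAt_mono_ncard ?_ z).trans (starAt_ncard_erase (hTL he) hze hle)
        rintro x ⟨⟨hx1, hx2⟩, -⟩
        exact ⟨hx1, by rintro rfl; exact hx2 he⟩)
    (by rw [Finset.card_erase_of_mem htD, hDc]; rfl)
  refine ⟨fun e => if e ∈ T then t else if e ∈ colored G E D then k e else E e, ?_, ?_, ?_, ?_⟩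
  · intro e₁ h₁ e₂ h₂ hne hx
    have key : ∀ e ∈ G.edgeSet \ B, e ∉ T → e ∈ colored G E D → k e ∈ D.erase t :=
      fun e he h1 h2 => hk2 e ⟨⟨h2, h1⟩, he.2⟩
    have key' : ∀ e ∈ G.edgeSet \ B, e ∉ colored G E D → E e ∉ D :=
      fun e he h1 h2 => h1 ⟨he.1, h2⟩
    have a1 := key e₁ h₁
    have a2 := key e₂ h₂
    have b1 := key' e₁ h₁
    have b2 := key' e₂ h₂
    have c2 := hE.2 e₁ h₁.1 e₂ h₂.1 hne hx
    dsimp only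
    by_cases t1 : e₁ ∈ T
    · by_cases t2 : e₂ ∈ T
      · exact absurd (hT e₁ t1 e₂ t2 hx) hne
      · rw [if_pos t1, if_neg t2]
        split_ifs with l2
        · exact (Finset.ne_of_mem_erase (a2 t2 l2)).symm
        · rintro rfl; exact b2 l2 htD
    · by_cases t2 : e₂ ∈ T
      · rw [if_neg t1, if_pos t2]
        split_ifs with l1
        · exact Finset.ne_of_mem_erase (a1 t1 l1)
        · rintro rfl; exact b1 l1 htD
      · rw [if_neg t1, if_neg t2]
        split_ifs with l1 l2 l2
        · exact hk1 e₁ ⟨⟨l1, t1⟩, h₁.2⟩ e₂ ⟨⟨l2, t2⟩, h₂.2⟩ hne hx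
        · intro h; exact b2 l2 (h ▸ Finset.mem_of_mem_erase (a1 t1 l1))
        · intro h; exact b1 l1 (h ▸ Finset.mem_of_mem_erase (a2 t2 l2))
        · exact c2
  · intro e he
    dsimp only
    split_ifs with h1 h2
    · exact hDt htD
    · exact hDt (Finset.mem_of_mem_erase (hk2 e ⟨⟨h2, h1⟩, he.2⟩))
    · exact hE.1 e he.1
  · intro e he
    dsimp only
    split_ifs with h1 h2
    · simp [h1]
    · have := Finset.ne_of_mem_erase (hk2 e ⟨⟨h2, h1⟩, he.2⟩)
      simp [h1, this]
    · have : E e ≠ t := fun h => h2 ⟨he.1, h ▸ htD⟩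
      simp [h1, this]
  · intro e he
    dsimp only
    split_ifs with h1 h2
    · exact Or.inr ⟨htD, (hTL h1).2⟩
    · exact Or.inr ⟨Finset.mem_of_mem_erase (hk2 e ⟨⟨h2, h1⟩, he.2⟩), h2.2⟩
    · exact Or.inl rfl

/-- The state of the process that turns one class `t` into another: `T`, together with the edges
in `B`, lies in the union of `q` color classes (those of `D`, one of which is `t`) of a proper
coloring `E` that is `(q + 1)`-equivalent to `f`, and every vertex uncovered by `T` misses a color
of `D`, with the possible exception of the vertices in `Y`. -/
def Near (G : SimpleGraph V) (q t : ℕ) (f : Sym2 V → ℕ) (T : Set (Sym2 V)) (Y : Set V)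
    (B : Set (Sym2 V)) : Prop :=
  ∃ (E : Sym2 V → ℕ) (D : Finset ℕ), IsProperEdgeColoring G t E ∧ NEquiv G t (q + 1) E f ∧
    D ⊆ Finset.Icc 1 t ∧ D.card = q ∧ t ∈ D ∧ T ⊆ colored G E D ∧ B ⊆ colored G E D ∧
    ∀ z, z ∉ Y → Uncovered T z → ∃ m ∈ D, MissingAt G E m z

/-- If the exceptional vertex has degree less than `t`, then `T` is the class `t` of a coloring
`(q + 1)`-equivalent to `f`. -/
theorem Near.finish [Fintype V] {q t : ℕ} {G : SimpleGraph V} (hA : MemA q G)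
    (hqt : q + 1 ≤ t) {f : Sym2 V → ℕ} {T : Set (Sym2 V)} {y : V} (hT : MatchingSet T)
    (hy : deg G y < t) (hN : Near G q t f T {y} ∅) :
    ∃ fb, IsProperEdgeColoring G t fb ∧ NEquiv G t (q + 1) fb f ∧ colorClass G fb t = T := by
  classical
  obtain ⟨E, D, hE, hEf, hDt, hDc, htD, hTL, -, hmiss⟩ := hN
  obtain ⟨m, hm, hmy⟩ := exists_missingAt E hy
  obtain ⟨D₁, hD₁, hD₁t, hD₁c⟩ := Finset.exists_subsuperset_card_eq
    (s := insert m D) (t := Finset.Icc 1 t) (n := q + 1)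
    (Finset.insert_subset hm hDt) ((Finset.card_insert_le _ _).trans (by omega))
    (by rw [Nat.card_Icc]; omega)
  have hDD₁ : D ⊆ D₁ := (Finset.subset_insert m D).trans hD₁
  obtain ⟨h, h1, h2, h3, h4⟩ := recolor hA hE hD₁t hD₁c (hDD₁ htD) hT
    (fun e he => ⟨(hTL he).1, hDD₁ (hTL he).2⟩) (B := ∅) (Set.empty_subset _) (by
      intro z hz
      right
      by_cases hzy : z = y
      · exact ⟨m, hD₁ (Finset.mem_insert_self _ _), hzy ▸ hmy⟩
      · obtain ⟨m', hm', hz'⟩ := hmiss z (by simpa using hzy) hz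
        exact ⟨m', hDD₁ hm', hz'⟩)
  rw [Set.sdiff_empty] at h1 h2 h3 h4
  have hp : IsProperEdgeColoring G t h := ⟨h2, h1⟩
  refine ⟨h, hp, hEf.step D₁ hD₁c.le hp h4, ?_⟩
  ext e
  constructor
  · rintro ⟨he, het⟩; exact (h3 e he).1 het
  · intro he; exact ⟨(hTL he).1, (h3 e (hTL he).1).2 he⟩

/-- If `T` misses `y`, then any edge `yw` can be brought into the `q` classes of the state, at the
price of making `w` exceptional too. First `q + 1` classes are recolored to make `T` the class `t`
of a coloring `h` of `G - yw`. In `h`, the vertex `y` misses `t` and `w` misses some color `x`, so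
`yw` can be put back within any `q` of these classes that include `t` and `x`. -/
theorem Near.extend [Fintype V] {q t : ℕ} (hq : 3 ≤ q) {G : SimpleGraph V} (hA : MemA q G)
    (hqt : q + 1 ≤ t) {f : Sym2 V → ℕ} {T : Set (Sym2 V)} {y w : V} (hT : MatchingSet T)
    (hy : Uncovered T y) (hyw : G.Adj y w) (hN : Near G q t f T {y} ∅) :
    Near G q t f T {y, w} {s(y, w)} := by
  classical
  obtain ⟨E, D, hE, hEf, hDt, hDc, htD, hTL, -, hmiss⟩ := hN
  obtain ⟨D₁, hD₁, hD₁t, hD₁c⟩ := Finset.exists_subsuperset_card_eq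
    (s := insert (E s(y, w)) D) (t := Finset.Icc 1 t) (n := q + 1)
    (Finset.insert_subset (hE.1 _ hyw) hDt) ((Finset.card_insert_le _ _).trans (by omega))
    (by rw [Nat.card_Icc]; omega)
  have hDD₁ : D ⊆ D₁ := (Finset.subset_insert _ D).trans hD₁
  have htD₁ := hDD₁ htD
  have he₀L : s(y, w) ∈ colored G E D₁ := ⟨hyw, hD₁ (Finset.mem_insert_self _ _)⟩
  have he₀T : s(y, w) ∉ T := fun h => hy _ h (by simp)
  have hTG : T ⊆ G.edgeSet \ {s(y, w)} := fun e he =>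
    ⟨(hTL he).1, by rintro rfl; exact he₀T he⟩
  obtain ⟨h, h1, h2, h3, h4⟩ := recolor hA hE hD₁t hD₁c htD₁ hT
    (fun e he => ⟨(hTL he).1, hDD₁ (hTL he).2⟩) (B := {s(y, w)}) (by simpa using he₀L) (by
      intro z hz
      by_cases hzy : z = y
      · exact Or.inl ⟨s(y, w), rfl, by simp [hzy]⟩
      · obtain ⟨m', hm', hz'⟩ := hmiss z (by simpa using hzy) hz
        exact Or.inr ⟨m', hDD₁ hm', hz'⟩)
  -- the color `x` missed by `w`
  obtain ⟨x, hxD₁, hx⟩ : ∃ x ∈ D₁, ∀ e ∈ G.edgeSet \ {s(y, w)}, w ∈ e → h e ≠ x := by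
    have hPL : ProperOn (colored G E D₁) E := fun e₁ h₁ e₂ h₂ => hE.2 e₁ h₁.1 e₂ h₂.1
    have hle := starAt_ncard_le hPL (z := w) D₁ (fun e he _ => he.2)
    rw [hD₁c] at hle
    have hlt := starAt_ncard_erase he₀L (z := w) (by simp) hle
    obtain ⟨x, hxD₁, hx⟩ := exists_missing h (K := D₁) (lt_of_le_of_lt hlt (by omega))
    refine ⟨x, hxD₁, fun e he hwe hex => ?_⟩
    have heD : E e ∈ D₁ := by
      rcases h4 e he with h5 | h5
      · rw [← h5, hex]; exact hxD₁
      · exact h5.2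
    exact hx e ⟨⟨he.1, heD⟩, he.2⟩ hwe hex
  obtain ⟨D₂, hD₂, hD₂₁, hD₂c⟩ := Finset.exists_subsuperset_card_eq
    (s := {t, x}) (t := D₁) (n := q)
    (Finset.insert_subset htD₁ (Finset.singleton_subset_iff.2 hxD₁))
    (Finset.card_le_two.trans (by omega)) (by omega)
  have htD₂ : t ∈ D₂ := hD₂ (by simp)
  have hxD₂ : x ∈ D₂ := hD₂ (by simp)
  let S₀ : Set (Sym2 V) := {e | e ∈ G.edgeSet \ {s(y, w)} ∧ h e ∈ D₂}
  let S : Set (Sym2 V) := insert s(y, w) S₀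
  have hS₀P : ProperOn S₀ h := fun e₁ a₁ e₂ a₂ => h1 e₁ a₁.1 e₂ a₂.1
  have hSG : S ⊆ G.edgeSet := by
    rintro e (rfl | he)
    · exact hyw
    · exact he.1.1
  have hTS : T ⊆ S := fun e he => Or.inr ⟨hTG he, by rw [(h3 e (hTG he)).2 he]; exact htD₂⟩
  -- a color of `D₂` missing at `z` leaves at most `q - 1` edges of `S₀` at `z`
  have hS₀lt : ∀ z, ∀ m ∈ D₂, (∀ e ∈ G.edgeSet \ {s(y, w)}, z ∈ e → h e ≠ m) →
      (starAt S₀ z).ncard + 1 ≤ q := by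
    intro z m hm hz
    have := starAt_ncard_le hS₀P (z := z) (D₂.erase m) (fun e he hze =>
      Finset.mem_erase.2 ⟨hz e he.1 hze, he.2⟩)
    rw [Finset.card_erase_of_mem hm, hD₂c] at this
    omega
  have hunc : ∀ z, Uncovered T z → ∀ e ∈ G.edgeSet \ {s(y, w)}, z ∈ e → h e ≠ t :=
    fun z hz e he hze het => hz e ((h3 e he).1 het) hze
  have hSout : ∀ z, z ≠ y → z ≠ w → starAt S z = starAt S₀ z := by
    intro z hzy hzw
    ext e
    constructor
    · rintro ⟨rfl | he, hze⟩
      · simp [hzy, hzw] at hze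
      · exact ⟨he, hze⟩
    · rintro ⟨he, hze⟩
      exact ⟨Or.inr he, hze⟩
  have hSin : ∀ z, (starAt S z).ncard ≤ (starAt S₀ z).ncard + 1 := by
    intro z
    refine le_trans (Set.ncard_le_ncard ?_ (Set.toFinite _))
      (Set.ncard_insert_le s(y, w) (starAt S₀ z))
    rintro e ⟨rfl | he, hze⟩
    · exact Or.inl rfl
    · exact Or.inr ⟨he, hze⟩
  obtain ⟨k, hk1, hk2⟩ := hA.exists_coloring hSG (K := D₂) (by
    intro z
    by_cases hzy : z = y
    · exact (hSin z).trans (hS₀lt z t htD₂ (hunc z (hzy ▸ hy)))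
    · by_cases hzw : z = w
      · exact (hSin z).trans (hS₀lt z x hxD₂ (hzw ▸ hx))
      · rw [hSout z hzy hzw, ← hD₂c]
        exact starAt_ncard_le hS₀P D₂ (fun e he _ => he.2)) hD₂c
  let E' : Sym2 V → ℕ := fun e => if e ∈ S then k e else h e
  have hE'S : ∀ e ∈ S, E' e = k e := fun e he => if_pos he
  have hE'S' : ∀ e ∉ S, E' e = h e := fun e he => if_neg he
  have hnS : ∀ e ∈ G.edgeSet, e ∉ S → e ∈ G.edgeSet \ {s(y, w)} ∧ h e ∉ D₂ := by
    intro e he heS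
    have h5 : e ∈ G.edgeSet \ {s(y, w)} := ⟨he, fun h6 => heS (Or.inl h6)⟩
    exact ⟨h5, fun h6 => heS (Or.inr ⟨h5, h6⟩)⟩
  have hE'D : ∀ e ∈ G.edgeSet, E' e ∈ D₂ ↔ e ∈ S := by
    intro e he
    constructor
    · intro h5
      by_contra heS
      rw [hE'S' e heS] at h5
      exact (hnS e he heS).2 h5
    · intro heS
      rw [hE'S e heS]
      exact hk2 e heS
  have hE' : IsProperEdgeColoring G t E' := by
    refine ⟨fun e he => ?_, fun e₁ g₁ e₂ g₂ hne hsh => ?_⟩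
    · by_cases heS : e ∈ S
      · exact hD₁t (hD₂₁ ((hE'D e he).2 heS))
      · rw [hE'S' e heS]; exact h2 e (hnS e he heS).1
    · by_cases s₁ : e₁ ∈ S <;> by_cases s₂ : e₂ ∈ S
      · rw [hE'S e₁ s₁, hE'S e₂ s₂]; exact hk1 e₁ s₁ e₂ s₂ hne hsh
      · exact fun h5 => s₂ ((hE'D e₂ g₂).1 (h5 ▸ (hE'D e₁ g₁).2 s₁))
      · exact fun h5 => s₁ ((hE'D e₁ g₁).1 (h5 ▸ (hE'D e₂ g₂).2 s₂))
      · rw [hE'S' e₁ s₁, hE'S' e₂ s₂]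
        exact h1 e₁ (hnS e₁ g₁ s₁).1 e₂ (hnS e₂ g₂ s₂).1 hne hsh
  refine ⟨E', D₂, hE', hEf.step D₁ hD₁c.le hE' ?_, hD₂₁.trans hD₁t, hD₂c, htD₂,
    fun e he => ⟨(hTL he).1, (hE'D e (hTL he).1).2 (hTS he)⟩, ?_, ?_⟩
  · intro e he
    by_cases heS : e ∈ S
    · refine Or.inr ⟨hD₂₁ ((hE'D e he).2 heS), ?_⟩
      rcases heS with rfl | heS
      · exact he₀L.2
      · rcases h4 e heS.1 with h5 | h5
        · rw [← h5]; exact hD₂₁ heS.2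
        · exact h5.2
    · rw [hE'S' e heS]
      exact h4 e (hnS e he heS).1
  · rintro e rfl
    exact ⟨hyw, (hE'D _ hyw).2 (Or.inl rfl)⟩
  · intro z hzY hz
    simp only [Set.mem_insert_iff, Set.mem_singleton_iff, not_or] at hzY
    have hlt := hS₀lt z t htD₂ (hunc z hz)
    rw [← hSout z hzY.1 hzY.2] at hlt
    obtain ⟨m, hm, hmz⟩ := exists_missing E' (S := S) (z := z) (K := D₂) (by omega)
    refine ⟨m, hm, fun e he hze hem => ?_⟩
    exact hmz e ((hE'D e he).1 (hem ▸ hm)) hze hem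

/-- The uncovered vertex of `T` slides from `y` to `w'` along the edges `yw ∉ T` and `ww' ∈ T`. -/
theorem Near.slide {q t : ℕ} {G : SimpleGraph V} {f : Sym2 V → ℕ} {T : Set (Sym2 V)}
    {y w w' : V} (hy : Uncovered T y) (hww' : s(w, w') ∈ T)
    (hN : Near G q t f T {y, w} {s(y, w)}) :
    Near G q t f (symmDiff T {s(y, w), s(w, w')}) {w'} ∅ := by
  obtain ⟨E, D, hE, hEf, hDt, hDc, htD, hTL, hBL, hmiss⟩ := hN
  have hyw : s(y, w) ∉ T := fun h => hy _ h (by simp)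
  have hne : s(y, w) ≠ s(w, w') := by rintro h; rw [h] at hyw; exact hyw hww'
  refine ⟨E, D, hE, hEf, hDt, hDc, htD, ?_, Set.empty_subset _, ?_⟩
  · rintro e (⟨he, -⟩ | ⟨rfl | rfl, he⟩)
    · exact hTL he
    · exact hBL rfl
    · exact absurd hww' he
  · intro z hz hunc
    have hz1 : z ∉ s(y, w) := hunc _ (Or.inr ⟨Or.inl rfl, hyw⟩)
    refine hmiss z (by simpa using hz1) fun e he hze => ?_
    by_cases h : e = s(w, w')
    · subst h
      simp only [Sym2.mem_iff, not_or, Set.mem_singleton_iff] at hz1 hze hz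
      tauto
    · refine hunc e (Or.inl ⟨he, ?_⟩) hze
      rintro (rfl | rfl)
      · exact hyw he
      · exact h rfl

/-- Adding `yw` to `T` covers both exceptional vertices, so that no exception remains; the vertex
`z₀` is arbitrary. -/
theorem Near.close {q t : ℕ} {G : SimpleGraph V} {f : Sym2 V → ℕ} {T : Set (Sym2 V)}
    {y w z₀ : V} (hN : Near G q t f T {y, w} {s(y, w)}) :
    Near G q t f (insert s(y, w) T) {z₀} ∅ := by
  obtain ⟨E, D, hE, hEf, hDt, hDc, htD, hTL, hBL, hmiss⟩ := hN
  refine ⟨E, D, hE, hEf, hDt, hDc, htD, ?_, Set.empty_subset _, ?_⟩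
  · rintro e (rfl | he)
    · exact hBL rfl
    · exact hTL he
  · intro z _ hunc
    exact hmiss z (by simpa using hunc _ (Or.inl rfl)) fun e he => hunc e (Or.inr he)

theorem MatchingSet.slide {T : Set (Sym2 V)} {y w w' : V} (hT : MatchingSet T)
    (hy : Uncovered T y) (hww' : s(w, w') ∈ T) (hne : w ≠ w') :
    MatchingSet (symmDiff T {s(y, w), s(w, w')}) ∧
      Uncovered (symmDiff T {s(y, w), s(w, w')}) w' := by
  have hmem : ∀ e ∈ symmDiff T {s(y, w), s(w, w')}, e = s(y, w) ∨ (e ∈ T ∧ e ≠ s(w, w')) := by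
    rintro e (⟨he, h⟩ | ⟨rfl | rfl, h⟩)
    · exact Or.inr ⟨he, fun h' => h (Or.inr h')⟩
    · exact Or.inl rfl
    · exact absurd hww' h
  have hno : ∀ e ∈ T, e ≠ s(w, w') → ∀ x, x ∈ s(y, w) → x ∉ e := by
    intro e he hne x hx hxe
    rcases Sym2.mem_iff.1 hx with rfl | rfl
    · exact hy e he hxe
    · exact hne (hT e he _ hww' ⟨x, hxe, by simp⟩)
  refine ⟨?_, ?_⟩
  · rintro e₁ h₁ e₂ h₂ ⟨x, hx₁, hx₂⟩
    rcases hmem e₁ h₁ with rfl | ⟨a₁, b₁⟩ <;> rcases hmem e₂ h₂ with rfl | ⟨a₂, b₂⟩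
    · rfl
    · exact absurd hx₂ (hno e₂ a₂ b₂ x hx₁)
    · exact absurd hx₁ (hno e₁ a₁ b₁ x hx₂)
    · exact hT e₁ a₁ e₂ a₂ ⟨x, hx₁, hx₂⟩
  · intro e he hw'
    rcases hmem e he with rfl | ⟨a, b⟩
    · rcases Sym2.mem_iff.1 hw' with rfl | rfl
      · exact hy _ hww' (by simp)
      · exact hne rfl
    · exact b (hT e a _ hww' ⟨w', hw', by simp⟩)

/-! ### Alternating walks -/

/-- The edges of the list `l` are alternately in `T` and not in `T`; the first one is in `T`
if and only if `b` is `true`. -/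
def AltB (T : Set (Sym2 V)) : Bool → List (Sym2 V) → Prop
  | _, [] => True
  | b, e :: l => (e ∈ T ↔ b = true) ∧ AltB T (!b) l

theorem AltB.congr {T T' : Set (Sym2 V)} : ∀ {l : List (Sym2 V)} {b : Bool},
    (∀ e ∈ l, e ∈ T ↔ e ∈ T') → AltB T b l → AltB T' b l
  | [], _, _, _ => trivial
  | e :: l, b, h, hl => ⟨(h e (by simp)).symm.trans hl.1,
      AltB.congr (fun x hx => h x (by simp [hx])) hl.2⟩

theorem AltB.compl {T T' : Set (Sym2 V)} : ∀ {l : List (Sym2 V)} {b : Bool},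
    (∀ e ∈ l, e ∈ T ↔ e ∉ T') → AltB T b l → AltB T' (!b) l
  | [], _, _, _ => trivial
  | e :: l, b, h, hl => ⟨by have := h e (by simp); have := hl.1; cases b <;> simp_all,
      AltB.compl (fun x hx => h x (by simp [hx])) hl.2⟩

theorem AltB.append {T : Set (Sym2 V)} : ∀ {l l' : List (Sym2 V)} {b : Bool},
    AltB T b l → AltB T (if Even l.length then b else !b) l' → AltB T b (l ++ l')
  | [], _, _, _, h => by simpa using h
  | e :: l, l', b, h, h' => ⟨h.1, AltB.append h.2 (by
      simp only [List.length_cons, Nat.even_add_one] at h'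
      by_cases he : Even l.length <;> simpa [he] using h')⟩

theorem AltB.reverse {T : Set (Sym2 V)} : ∀ {l : List (Sym2 V)} {b : Bool},
    AltB T b l → AltB T (if Even l.length then !b else b) l.reverse
  | [], _, _ => trivial
  | e :: l, b, h => by
    rw [List.reverse_cons]
    refine AltB.append (b := if Even (e :: l).length then !b else b) ?_ ⟨?_, trivial⟩
    · have := AltB.reverse h.2
      simp only [List.length_cons, Nat.even_add_one]
      by_cases he : Even l.length <;> simpa [he] using this
    · simp only [List.length_reverse, List.length_cons, Nat.even_add_one]
      have := h.1
      by_cases he : Even l.length <;> simpa [he] using this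

/-- The edges of the walk `r`, as a set. -/
def edgesOf {G : SimpleGraph V} {y z : V} (r : G.Walk y z) : Set (Sym2 V) := {e | e ∈ r.edges}

/-- A state of the process with a single exceptional vertex `y`, uncovered by `T`. -/
def Hole (G : SimpleGraph V) (q t : ℕ) (f : Sym2 V → ℕ) (T : Set (Sym2 V)) (y : V) : Prop :=
  Near G q t f T {y} ∅ ∧ MatchingSet T ∧ Uncovered T y

/-- The uncovered vertex travels along an alternating trail of even length, two edges at a time. -/
theorem Hole.travel [Fintype V] {q t : ℕ} (hq : 3 ≤ q) {G : SimpleGraph V} (hA : MemA q G)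
    (hqt : q + 1 ≤ t) {f : Sym2 V → ℕ} : ∀ {y z : V} (r : G.Walk y z) (T : Set (Sym2 V)),
    r.IsTrail → Even r.length → AltB T false r.edges → Hole G q t f T y →
    Hole G q t f (symmDiff T (edgesOf r)) z
  | y, _, .nil, T, _, _, _, h => by
    have : edgesOf (Walk.nil : G.Walk y y) = ∅ := by ext; simp [edgesOf]
    rw [this, ← Set.bot_eq_empty, symmDiff_bot]
    exact h
  | _, _, .cons _ .nil, T, _, he, _, _ => by simp at he
  | y, z, .cons (v := w) h (.cons (v := w') h' r), T, ht, he, ha, hH => by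
    obtain ⟨hN, hT, hy⟩ := hH
    simp only [Walk.edges_cons] at ha
    obtain ⟨-, ha2, ha3⟩ := ha
    have hww' : s(w, w') ∈ T := by simpa using ha2
    have hyw : s(y, w) ∉ T := fun h => hy _ h (by simp)
    rw [Walk.isTrail_cons, Walk.isTrail_cons] at ht
    obtain ⟨⟨ht1, ht2⟩, ht3⟩ := ht
    rw [Walk.edges_cons, List.mem_cons, not_or] at ht3
    have hm := hT.slide hy hww' h'.ne
    have hrec := Hole.travel hq hA hqt r (symmDiff T {s(y, w), s(w, w')}) ht1
      (by simpa [Nat.even_add_one] using he)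
      (AltB.congr (fun e he => by
        have h1 : e ≠ s(y, w) := by rintro rfl; exact ht3.2 he
        have h2 : e ≠ s(w, w') := by rintro rfl; exact ht2 he
        simp [Set.mem_symmDiff, h1, h2]) ha3)
      ⟨(hN.extend hq hA hqt hT hy h).slide hy hww', hm.1, hm.2⟩
    convert hrec using 1
    ext e
    have h1 : e ∈ r.edges → e ≠ s(y, w) := by rintro h rfl; exact ht3.2 h
    have h2 : e ∈ r.edges → e ≠ s(w, w') := by rintro h rfl; exact ht2 h
    simp only [Set.mem_symmDiff, edgesOf, Walk.edges_cons, List.mem_cons, Set.mem_ofPred_eq,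
      Set.mem_insert_iff, Set.mem_singleton_iff]
    grind

/-- The uncovered vertex travels from `y` along an alternating path `P` to the vertex `b`, once
around the alternating cycle `bv ∪ r`, and back to `y` along `P`. The changes along `P` cancel,
so the net effect is an exchange on the cycle. -/
theorem Hole.lollipop [Fintype V] {q t : ℕ} (hq : 3 ≤ q) {G : SimpleGraph V} (hA : MemA q G)
    (hqt : q + 1 ≤ t) {f : Sym2 V → ℕ} {y b v : V} {T : Set (Sym2 V)} (P : G.Walk y b)
    (h : G.Adj b v) (r : G.Walk v b) (hP : P.IsTrail) (hPo : Odd P.length)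
    (hPa : AltB T false P.edges) (hC : (Walk.cons h r).IsTrail) (hbv : s(b, v) ∈ T)
    (hro : Odd r.length) (hra : AltB T false r.edges)
    (hdisj : ∀ e ∈ P.edges, e ∉ (Walk.cons h r).edges) (hH : Hole G q t f T y) :
    Hole G q t f (symmDiff T (edgesOf (Walk.cons h r))) y := by
  have hPe : ¬ Even P.edges.length := by simpa using hPo
  have hre : ¬ Even r.edges.length := by simpa using hro
  rw [Walk.isTrail_cons] at hC
  simp only [Walk.edges_cons, List.mem_cons, not_or] at hdisj
  have hr₁ : (P.append (Walk.cons h .nil)).IsTrail := by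
    rw [Walk.isTrail_def, Walk.edges_append, List.nodup_append]
    refine ⟨hP.edges_nodup, by simp, ?_⟩
    intro e he e' he'
    simp only [Walk.edges_cons, Walk.edges_nil, List.mem_singleton] at he'
    rw [he']; exact (hdisj e he).1
  have hr₂ : (r.append P.reverse).IsTrail := by
    rw [Walk.isTrail_def, Walk.edges_append, List.nodup_append]
    refine ⟨hC.1.edges_nodup, by simpa using hP.edges_nodup, ?_⟩
    rintro e he e' he' rfl
    exact (hdisj e (by simpa using he')).2 he
  have h₁ := hH.travel hq hA hqt (P.append (Walk.cons h .nil)) T hr₁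
    (by simpa [Nat.even_add_one] using hPo)
    (by
      rw [Walk.edges_append]
      refine hPa.append ?_
      rw [if_neg hPe]
      exact ⟨by simpa using hbv, trivial⟩)
  have hmem₁ : ∀ e, e ∈ edgesOf (P.append (Walk.cons h .nil)) ↔ e ∈ P.edges ∨ e = s(b, v) := by
    intro e; simp [edgesOf, Walk.edges_append]
  have h₂ := h₁.travel hq hA hqt (r.append P.reverse) _ hr₂
    (by
      rw [Walk.length_append, Walk.length_reverse]
      exact hro.add_odd hPo)
    (by
      rw [Walk.edges_append, Walk.edges_reverse]
      refine AltB.append (hra.congr ?_) ?_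
      · intro e he
        have a1 : e ∉ P.edges := fun h' => (hdisj e h').2 he
        have a2 : e ≠ s(b, v) := by rintro rfl; exact hC.2 he
        rw [Set.mem_symmDiff, hmem₁]
        tauto
      · have := hPa.reverse
        rw [if_neg hPe] at this
        rw [if_neg hre]
        refine AltB.compl ?_ this
        intro e he
        rw [Set.mem_symmDiff, hmem₁]
        have := List.mem_reverse.1 he
        tauto)
  convert h₂ using 1
  ext e
  have a1 : e ∈ r.edges → e ∉ P.edges := fun h h' => (hdisj e h').2 h
  have a2 : e ∈ r.edges → e ≠ s(b, v) := by rintro h rfl; exact hC.2 h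
  have a3 : e ∈ P.edges → e ≠ s(b, v) := fun h => (hdisj e h).1
  rw [Set.mem_symmDiff, Set.mem_symmDiff, Set.mem_symmDiff, hmem₁]
  simp only [edgesOf, Walk.edges_append, Walk.edges_reverse, Walk.edges_cons, List.mem_cons,
    List.mem_append, List.mem_reverse, Set.mem_ofPred_eq]
  grind

/-- If, of any two consecutive edges of a trail, at least one is in the matching `T`, then exactly
one is, that is, the edges alternate. -/
theorem exists_altB {G : SimpleGraph V} {T : Set (Sym2 V)} (hT : MatchingSet T) :
    ∀ {y z : V} (r : G.Walk y z), r.IsTrail →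
      r.edges.IsChain (fun e e' => e ∈ T ∨ e' ∈ T) → ∃ b, AltB T b r.edges
  | _, _, .nil, _, _ => ⟨true, trivial⟩
  | y, _, .cons (v := w) _ .nil, _, _ => by
    by_cases h : s(y, w) ∈ T
    · exact ⟨true, by simpa using h, trivial⟩
    · exact ⟨false, by simpa using h, trivial⟩
  | y, z, .cons (v := w) h (.cons (v := w') h' r), ht, hc => by
    rw [Walk.isTrail_cons] at ht
    rw [Walk.edges_cons, Walk.edges_cons, List.isChain_cons_cons, ← Walk.edges_cons h'] at hc
    obtain ⟨b, hb⟩ := exists_altB hT (Walk.cons h' r) ht.1 hc.2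
    refine ⟨!b, ?_, by rw [Bool.not_not]; exact hb⟩
    have hb1 : s(w, w') ∈ T ↔ b = true := hb.1
    have hne : s(y, w) ≠ s(w, w') := by
      intro he; apply ht.2; rw [he]; simp
    have hn : ¬ (s(y, w) ∈ T ∧ s(w, w') ∈ T) := fun h =>
      hne (hT _ h.1 _ h.2 ⟨w, by simp, by simp⟩)
    have := hc.1
    cases b <;> simp_all

/-- Two consecutive edges of a trail in `T ∪ T'` cannot both be in the matching `T'`. -/
theorem isChain_of_subset {G : SimpleGraph V} {T T' : Set (Sym2 V)} (hT' : MatchingSet T') :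
    ∀ {y z : V} (r : G.Walk y z), r.IsTrail → (∀ e ∈ r.edges, e ∈ T ∨ e ∈ T') →
      r.edges.IsChain (fun e e' => e ∈ T ∨ e' ∈ T)
  | _, _, .nil, _, _ => by simp
  | _, _, .cons _ .nil, _, _ => by simp
  | y, z, .cons (v := w) h (.cons (v := w') h' r), ht, hr => by
    rw [Walk.isTrail_cons] at ht
    rw [Walk.edges_cons, Walk.edges_cons, List.isChain_cons_cons, ← Walk.edges_cons h']
    refine ⟨?_, isChain_of_subset hT' (Walk.cons h' r) ht.1 fun e he => hr e (by
      rw [Walk.edges_cons]; exact List.mem_cons_of_mem _ he)⟩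
    have hne : s(y, w) ≠ s(w, w') := by
      intro he; apply ht.2; rw [he]; simp
    by_contra! hcon
    have h1 := (hr s(y, w) (by simp)).resolve_left hcon.1
    have h2 := (hr s(w, w') (by simp)).resolve_left hcon.2
    exact hne (hT' _ h1 _ h2 ⟨w, by simp, by simp⟩)

/-- A closed trail in the union of two matchings that starts with an edge of `T` alternates and
has even length. -/
theorem closed_altB {G : SimpleGraph V} {T T' : Set (Sym2 V)} (hT : MatchingSet T)
    (hT' : MatchingSet T') {b v : V} (h : G.Adj b v) (r : G.Walk v b)
    (hC : (Walk.cons h r).IsTrail) (hsub : ∀ e ∈ (Walk.cons h r).edges, e ∈ T ∨ e ∈ T')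
    (hbv : s(b, v) ∈ T) : Odd r.length ∧ AltB T false r.edges := by
  obtain ⟨β, hβ⟩ := exists_altB hT _ hC (isChain_of_subset hT' _ hC hsub)
  rw [Walk.edges_cons] at hβ
  obtain rfl : β = true := hβ.1.1 hbv
  have hr : AltB T false r.edges := hβ.2
  refine ⟨?_, hr⟩
  by_contra hodd
  have hrev := hr.reverse
  rw [Walk.length_edges, if_pos (Nat.not_odd_iff_even.1 hodd), ← Walk.edges_reverse] at hrev
  rw [Walk.isTrail_cons] at hC
  -- with `r` of even length, the last edge at `b` would be in `T`, like the first
  cases hrr : r.reverse with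
  | nil => exact h.ne rfl
  | @cons _ v₃ _ h₃ r₃ =>
    rw [hrr, Walk.edges_cons] at hrev
    have h1 : s(b, v₃) ∈ T := hrev.1.2 rfl
    have h2 : s(b, v₃) ∈ r.edges := by
      rw [← List.mem_reverse, ← Walk.edges_reverse, hrr]; simp
    exact hC.2 (hT _ hbv _ h1 ⟨b, by simp, by simp⟩ ▸ h2)

/-- A closed trail in the union of two matchings can be traversed, in one of the two directions,
starting with an edge of `T`. -/
theorem exists_closed_altB {G : SimpleGraph V} {T T' : Set (Sym2 V)} (hT : MatchingSet T)
    (hT' : MatchingSet T') {b : V} (c : G.Walk b b) (hc : c.IsTrail) (hnil : ¬ c.Nil)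
    (hsub : ∀ e ∈ c.edges, e ∈ T ∨ e ∈ T') :
    ∃ (v : V) (h : G.Adj b v) (r : G.Walk v b), (Walk.cons h r).IsTrail ∧
      (∀ e, e ∈ (Walk.cons h r).edges ↔ e ∈ c.edges) ∧ s(b, v) ∈ T ∧ Odd r.length ∧
      AltB T false r.edges := by
  cases c with
  | nil => simp at hnil
  | @cons _ v _ h r =>
    by_cases hbv : s(b, v) ∈ T
    · have := closed_altB hT hT' h r hc hsub hbv
      exact ⟨v, h, r, hc, fun _ => Iff.rfl, hbv, this⟩
    · cases hrr : r.reverse with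
      | nil => exact absurd rfl h.ne
      | @cons _ v₃ _ h₃ r₃ =>
        have h2 : s(b, v₃) ∈ r.edges := by
          rw [← List.mem_reverse, ← Walk.edges_reverse, hrr]; simp
        have h1 : s(b, v₃) ∈ T := by
          by_contra hcon
          have e1 := (hsub s(b, v) (by simp)).resolve_left hbv
          have e2 := (hsub s(b, v₃) (by simp [h2])).resolve_left hcon
          rw [Walk.isTrail_cons] at hc
          exact hc.2 (hT' _ e1 _ e2 ⟨b, by simp, by simp⟩ ▸ h2)
        have hrev : (Walk.cons h r).reverse = Walk.cons h₃ (r₃.append (Walk.cons h.symm .nil)) := by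
          rw [Walk.reverse_cons, hrr, Walk.cons_append]
        have hC' : (Walk.cons h₃ (r₃.append (Walk.cons h.symm .nil))).IsTrail := by
          rw [← hrev]; exact hc.reverse
        have hE' : ∀ e, e ∈ (Walk.cons h₃ (r₃.append (Walk.cons h.symm .nil))).edges ↔
            e ∈ (Walk.cons h r).edges := by
          intro e; rw [← hrev, Walk.edges_reverse, List.mem_reverse]
        have := closed_altB hT hT' h₃ _ hC' (fun e he => hsub e ((hE' e).1 he)) h1
        exact ⟨v₃, h₃, _, hC', hE', h1, this⟩

/-! ### The exchange on the cycle -/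

/-- If no edge of a `T`-alternating walk at its terminus is in `T`, the parity of its length tells
whether its first edge is in `T`. -/
theorem altB_of_terminus {G : SimpleGraph V} {T : Set (Sym2 V)} {a b : V} (p : G.Walk a b)
    (hlen : 1 ≤ p.length) {β : Bool} (hβ : AltB T β p.edges)
    (hb : ∀ e ∈ p.edges, b ∈ e → e ∉ T) : AltB T (decide (Even p.length)) p.edges := by
  have hrev := hβ.reverse
  rw [Walk.length_edges, ← Walk.edges_reverse] at hrev
  cases hpr : p.reverse with
  | nil =>
    have := congrArg Walk.length hpr
    rw [Walk.length_reverse, Walk.length_nil] at this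
    omega
  | @cons _ v _ h r =>
    rw [hpr, Walk.edges_cons] at hrev
    have h2 : s(b, v) ∈ p.edges := by
      rw [← List.mem_reverse, ← Walk.edges_reverse, hpr]; simp
    have h1 := hrev.1
    have h3 := hb _ h2 (by simp)
    convert hβ
    by_cases he : Even p.length <;> cases β <;> simp [he, h3] at h1 ⊢

theorem AltPath.exists_altB {G : SimpleGraph V} {t : ℕ} {f : Sym2 V → ℕ} {a b : V}
    (hT : MatchingSet (colorClass G f t)) {p : G.Walk a b} (hp : p.IsTrail)
    (h : AltPath f t p) : ∃ β, AltB (colorClass G f t) β p.edges := by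
  refine EdgeTrans.exists_altB hT p hp ?_
  rw [List.isChain_iff_getElem]
  intro i hi
  refine (h i hi).imp (fun h' => ⟨?_, h'⟩) (fun h' => ⟨?_, h'⟩)
  · exact p.edges_subset_edgeSet (List.getElem_mem _)
  · exact p.edges_subset_edgeSet (List.getElem_mem _)

/-- A cycle of `G(f,g,t)`, seen in `G` and traversed from its vertex `b`, starting with an edge of
color `t` under `f`. -/
theorem exists_alternating_cycle {G : SimpleGraph V} {t : ℕ} {f g : Sym2 V → ℕ}
    (hf : IsProperEdgeColoring G t f) (hg : IsProperEdgeColoring G t g) {u b : V}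
    (c : (diffGraph G t f g).Walk u u) (hc : c.IsCycle) (hb : b ∈ c.support) :
    ∃ (v : V) (h : G.Adj b v) (r : G.Walk v b), (Walk.cons h r).IsTrail ∧
      (∀ e, e ∈ (Walk.cons h r).edges ↔ e ∈ c.edges) ∧ s(b, v) ∈ colorClass G f t ∧
      Odd r.length ∧ AltB (colorClass G f t) false r.edges := by
  classical
  have hsub : ∀ e ∈ (diffGraph G t f g).edgeSet, e ∈ colorClass G f t ∨ e ∈ colorClass G g t := by
    intro e he
    rw [diffGraph, SimpleGraph.edgeSet_fromEdgeSet] at he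
    exact he.1.imp And.left And.left
  have hle : diffGraph G t f g ≤ G := by
    rw [← SimpleGraph.edgeSet_subset_edgeSet]
    exact fun e he => (hsub e he).elim And.left And.left
  have hmem : ∀ e, e ∈ ((c.rotate b hb).mapLe hle).edges ↔ e ∈ c.edges := by
    intro e
    rw [Walk.edges_mapLe_eq_edges]
    exact (c.rotate_edges b hb).mem_iff
  have htr : ((c.rotate b hb).mapLe hle).IsTrail := by
    rw [Walk.isTrail_mapLe]
    exact hc.isTrail.rotate hb
  have hnil : ¬ ((c.rotate b hb).mapLe hle).Nil := by
    intro hn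
    rw [← Walk.length_eq_zero_iff] at hn
    have h1 := (c.rotate_edges b hb).perm.length_eq
    rw [← Walk.edges_mapLe_eq_edges hle, Walk.length_edges, Walk.length_edges, hn] at h1
    have := hc.three_le_length
    omega
  obtain ⟨v, h, r, h1, h2, h3⟩ := exists_closed_altB (hf.matchingSet t) (hg.matchingSet t)
    _ htr hnil (fun e he => hsub e (c.edges_subset_edgeSet ((hmem e).1 he)))
  exact ⟨v, h, r, h1, fun e => (h2 e).trans (hmem e), h3⟩

theorem exists_finset_of_colors {q t m : ℕ} (hq : 3 ≤ q) (hqt : q + 1 ≤ t)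
    (hm : m ∈ Finset.Icc 1 t) :
    ∃ D : Finset ℕ, D ⊆ Finset.Icc 1 t ∧ D.card = q ∧ t ∈ D ∧ m ∈ D := by
  obtain ⟨D, h1, h2, h3⟩ := Finset.exists_subsuperset_card_eq
    (s := {t, m}) (t := Finset.Icc 1 t) (n := q)
    (Finset.insert_subset (by rw [Finset.mem_Icc]; omega) (Finset.singleton_subset_iff.2 hm))
    (Finset.card_le_two.trans (by omega)) (by rw [Nat.card_Icc]; omega)
  exact ⟨D, h2, h3, h1 (by simp), h1 (by simp)⟩

/-- The exchange on the cycle when `P` has odd length: the process starts at the origin of `P`. -/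
theorem exists_exchange_odd [Fintype V] {q t : ℕ} (hq : 3 ≤ q) {G : SimpleGraph V}
    (hA : MemA q G) (hqt : q + 1 ≤ t) {f : Sym2 V → ℕ} (hf : IsProperEdgeColoring G t f)
    {a b v : V} (P : G.Walk a b) (h : G.Adj b v) (r : G.Walk v b) (hP : P.IsTrail)
    (hPo : Odd P.length) (hPa : AltB (colorClass G f t) false P.edges)
    (hC : (Walk.cons h r).IsTrail) (hbv : s(b, v) ∈ colorClass G f t) (hro : Odd r.length)
    (hra : AltB (colorClass G f t) false r.edges)
    (hdisj : ∀ e ∈ P.edges, e ∉ (Walk.cons h r).edges) (ha : deg G a < t)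
    (hmiss : MissingAt G f t a) :
    ∃ fb, IsProperEdgeColoring G t fb ∧ NEquiv G t (q + 1) fb f ∧
      colorClass G fb t = symmDiff (colorClass G f t) (edgesOf (Walk.cons h r)) := by
  obtain ⟨D, hDt, hDc, htD, -⟩ := exists_finset_of_colors hq hqt (m := t)
    (by rw [Finset.mem_Icc]; omega)
  have hH : Hole G q t f (colorClass G f t) a := by
    refine ⟨⟨f, D, hf, NEquiv.refl hf, hDt, hDc, htD, fun e he => ⟨he.1, by rw [he.2]; exact htD⟩,
      Set.empty_subset _, fun z _ hz => ⟨t, htD, fun e he hze het => hz e ⟨he, het⟩ hze⟩⟩,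
      hf.matchingSet t, fun e he hae => hmiss e he.1 hae he.2⟩
  have := hH.lollipop hq hA hqt P h r hP hPo hPa hC hbv hro hra hdisj
  exact this.1.finish hA hqt this.2.1 ha

/-- The exchange on the cycle when the path `ay ∪ P` has even length, hence starts with an edge
of color `t`: this edge is removed from the class `t`, the process starts at its second endpoint
`y`, and the edge is put back at the end. -/
theorem exists_exchange_even [Fintype V] {q t : ℕ} (hq : 3 ≤ q) {G : SimpleGraph V}
    (hA : MemA q G) (hqt : q + 1 ≤ t) {f : Sym2 V → ℕ} (hf : IsProperEdgeColoring G t f)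
    {a y b v : V} (h₀ : G.Adj a y) (P : G.Walk y b) (h : G.Adj b v) (r : G.Walk v b)
    (hP : (Walk.cons h₀ P).IsTrail)
    (hPo : Odd P.length) (hPa : AltB (colorClass G f t) true (Walk.cons h₀ P).edges)
    (hC : (Walk.cons h r).IsTrail) (hbv : s(b, v) ∈ colorClass G f t) (hro : Odd r.length)
    (hra : AltB (colorClass G f t) false r.edges)
    (hdisj : ∀ e ∈ (Walk.cons h₀ P).edges, e ∉ (Walk.cons h r).edges) (ha : deg G a < t)
    (haC : ∀ e ∈ (Walk.cons h r).edges, a ∉ e) :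
    ∃ fb, IsProperEdgeColoring G t fb ∧ NEquiv G t (q + 1) fb f ∧
      colorClass G fb t = symmDiff (colorClass G f t) (edgesOf (Walk.cons h r)) := by
  have hT := hf.matchingSet t
  obtain ⟨m, hm, hma⟩ := exists_missingAt f ha
  obtain ⟨D, hDt, hDc, htD, hmD⟩ := exists_finset_of_colors hq hqt hm
  rw [Walk.edges_cons] at hPa
  obtain ⟨hay, hPa⟩ := hPa
  replace hay : s(a, y) ∈ colorClass G f t := by simpa using hay
  rw [Walk.isTrail_cons] at hP
  have hay' := hdisj s(a, y) (by simp)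
  have hu : ∀ x ∈ s(a, y), Uncovered (colorClass G f t \ {s(a, y)}) x := fun x hx e he hxe =>
    he.2 (hT e he.1 _ hay ⟨x, hxe, hx⟩)
  have hH : Hole G q t f (colorClass G f t \ {s(a, y)}) y := by
    refine ⟨⟨f, D, hf, NEquiv.refl hf, hDt, hDc, htD,
      fun e he => ⟨he.1.1, by rw [he.1.2]; exact htD⟩, Set.empty_subset _, fun z hzy hz => ?_⟩,
      fun e₁ h₁ e₂ h₂ => hT e₁ h₁.1 e₂ h₂.1, hu y (by simp)⟩
    by_cases hza : z = a
    · exact ⟨m, hmD, hza ▸ hma⟩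
    · refine ⟨t, htD, fun e he hze het => hz e ⟨⟨he, het⟩, ?_⟩ hze⟩
      rintro rfl
      rcases Sym2.mem_iff.1 hze with h' | h'
      · exact hza h'
      · exact hzy h'
  have hL : Hole G q t f
      (symmDiff (colorClass G f t \ {s(a, y)}) (edgesOf (Walk.cons h r))) y :=
    hH.lollipop hq hA hqt P h r hP.1 hPo
    (hPa.congr fun e he =>
      ⟨fun h' => ⟨h', fun h'' : e = s(a, y) => hP.2 (h'' ▸ he)⟩, And.left⟩) hC
    ⟨hbv, by rintro (h' : s(b, v) = s(a, y)); exact hay' (by rw [← h']; simp)⟩ hro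
    (hra.congr fun e he => ⟨fun h' => ⟨h', fun h'' : e = s(a, y) =>
      hay' (by rw [Walk.edges_cons, ← h'']; exact List.mem_cons_of_mem _ he)⟩, And.left⟩)
    (fun e he => hdisj e (by rw [Walk.edges_cons]; exact List.mem_cons_of_mem _ he))
  have hN := (hL.1.extend hq hA hqt hL.2.1 hL.2.2 h₀.symm).close (z₀ := a)
  have heq : insert s(y, a) (symmDiff (colorClass G f t \ {s(a, y)}) (edgesOf (Walk.cons h r))) =
      symmDiff (colorClass G f t) (edgesOf (Walk.cons h r)) := by
    rw [Sym2.eq_swap]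
    ext e
    have hay'' : s(a, y) ∉ edgesOf (Walk.cons h r) := hay'
    simp only [Set.mem_insert_iff, Set.mem_symmDiff, Set.mem_sdiff, Set.mem_singleton_iff]
    grind
  have hua : Uncovered (symmDiff (colorClass G f t \ {s(a, y)}) (edgesOf (Walk.cons h r))) a := by
    rintro e (⟨he, -⟩ | ⟨he, -⟩)
    · exact hu a (by simp) e he
    · exact haC e he
  have hM : MatchingSet
      (insert s(y, a) (symmDiff (colorClass G f t \ {s(a, y)}) (edgesOf (Walk.cons h r)))) := by
    have key : ∀ e ∈ symmDiff (colorClass G f t \ {s(a, y)}) (edgesOf (Walk.cons h r)),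
        ∀ x ∈ s(y, a), x ∉ e := by
      intro e he x hx
      rcases Sym2.mem_iff.1 hx with rfl | rfl
      · exact hL.2.2 e he
      · exact hua e he
    rintro e₁ (rfl | h₁) e₂ (rfl | h₂) ⟨x, hx₁, hx₂⟩
    · rfl
    · exact absurd hx₂ (key e₂ h₂ x hx₁)
    · exact absurd hx₁ (key e₁ h₁ x hx₂)
    · exact hL.2.1 e₁ h₁ e₂ h₂ ⟨x, hx₁, hx₂⟩
  rw [heq] at hN hM
  exact hN.finish hA hqt hM ha

/-- Lemma about a cycle component `C` of `G(f,g,t)` colored with at least `q+2`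
colors, all of whose vertices have degree `t`, together with a `t`-alternating path `P`
meeting `C` exactly in the terminus of `P`, whose origin has degree less than `t` and, if `P`
has odd length, misses the color `t` at its origin. -/
theorem exists_better_coloring_of_cycle_component_with_alternating_path
    {V : Type*} [Fintype V] (q t : ℕ) (hq : 3 ≤ q) (G : SimpleGraph V)
    (hA : MemA q G) (ht : maxDeg G = t) (htq : q + 2 ≤ t)
    (f g : Sym2 V → ℕ)
    (hf : IsProperEdgeColoring G t f) (hg : IsProperEdgeColoring G t g)
    (hne : ∃ e ∈ G.edgeSet, f e ≠ g e)
    (u : V) (c : (diffGraph G t f g).Walk u u) (hc : c.IsCycle)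
    (hcomp : IsComponentWalk c)
    (hcolors : q + 2 ≤ (f '' {e | e ∈ c.edges}).ncard)
    (hdegC : ∀ a ∈ c.support, deg G a = t)
    (a b : V) (p : G.Walk a b) (hp : p.IsPath) (hplen : 1 ≤ p.length)
    (hpalt : AltPath f t p)
    (hterm : b ∈ c.support) (hmeet : ∀ w ∈ p.support, w ∈ c.support → w = b)
    (horig : deg G a < t)
    (hoddmiss : Odd p.length → MissingAt G f t a) :
    ∃ fb, IsProperEdgeColoring G t fb ∧ NEquiv G t (q + 1) fb f ∧
      (∀ e : Sym2 V, e ∉ c.edges → (e ∈ colorClass G fb t ↔ e ∈ colorClass G f t)) ∧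
      (colorClass G f t ∩ colorClass G g t).ncard <
        (colorClass G fb t ∩ colorClass G g t).ncard := by
  have hqt : q + 1 ≤ t := by omega
  obtain ⟨v, h, r, hC, hCc, hbv, hro, hra⟩ := exists_alternating_cycle hf hg c hc hterm
  have hT := hf.matchingSet t
  have hsupp : ∀ e ∈ c.edges, ∀ x ∈ e, x ∈ c.support := by
    intro e he x hx
    induction e with
    | _ y z =>
      rcases Sym2.mem_iff.1 hx with rfl | rfl
      · exact c.fst_mem_support_of_mem_edges he
      · exact c.snd_mem_support_of_mem_edges he
  have hdisj : ∀ e ∈ p.edges, e ∉ (Walk.cons h r).edges := by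
    intro e he hec
    rw [hCc] at hec
    induction e with
    | _ y z =>
      have hy := hmeet y (p.fst_mem_support_of_mem_edges he) (hsupp _ hec y (by simp))
      have hz := hmeet z (p.snd_mem_support_of_mem_edges he) (hsupp _ hec z (by simp))
      exact (p.adj_of_mem_edges he).ne (hy.trans hz.symm)
  have hab : a ≠ b := by
    rintro rfl
    have := Walk.length_eq_zero_iff.2 (Walk.isPath_iff_nil.1 hp)
    omega
  have haC : ∀ e ∈ (Walk.cons h r).edges, a ∉ e := fun e he hae =>
    hab (hmeet a p.start_mem_support (hsupp e ((hCc e).1 he) a hae))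
  obtain ⟨β, hβ⟩ := AltPath.exists_altB hT hp.isTrail hpalt
  -- the edge of color `t` at `b` is `bv`, which is on `C` and not on `P`
  have hpa := altB_of_terminus p hplen hβ (fun e he hbe heT => by
    have := hT e heT _ hbv ⟨b, hbe, by simp⟩
    exact hdisj e he (by rw [this]; simp))
  obtain ⟨fb, h1, h2, h3⟩ : ∃ fb, IsProperEdgeColoring G t fb ∧ NEquiv G t (q + 1) fb f ∧
      colorClass G fb t = symmDiff (colorClass G f t) (edgesOf (Walk.cons h r)) := by
    by_cases he : Even p.length
    · rw [decide_eq_true he] at hpa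
      cases p with
      | nil => simp at hplen
      | cons h₀ P =>
        exact exists_exchange_even hq hA hqt hf h₀ P h r hp.isTrail
          (by simpa [Nat.even_add_one] using he) hpa hC hbv hro hra hdisj horig haC
    · rw [decide_eq_false he] at hpa
      exact exists_exchange_odd hq hA hqt hf p h r hp.isTrail (Nat.not_even_iff_odd.1 he) hpa
        hC hbv hro hra hdisj horig (hoddmiss (Nat.not_even_iff_odd.1 he))
  have hmem : ∀ e, e ∈ edgesOf (Walk.cons h r) ↔ e ∈ c.edges := hCc
  refine ⟨fb, h1, h2, ?_, ?_⟩
  · intro e he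
    rw [h3, Set.mem_symmDiff, hmem]
    tauto
  · have hcd : ∀ e ∈ c.edges, (e ∈ colorClass G f t ∧ e ∉ colorClass G g t) ∨
        (e ∈ colorClass G g t ∧ e ∉ colorClass G f t) := by
      intro e he
      have := c.edges_subset_edgeSet he
      rw [diffGraph, SimpleGraph.edgeSet_fromEdgeSet] at this
      exact this.1
    refine Set.ncard_lt_ncard ⟨?_, ?_⟩ (Set.toFinite _)
    · rintro e ⟨he1, he2⟩
      refine ⟨?_, he2⟩
      rw [h3, Set.mem_symmDiff, hmem]
      refine Or.inl ⟨he1, fun hec => ?_⟩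
      have := hcd e hec
      tauto
    · -- the first edge of `r` enters the class `t`, and it has color `t` under `g`
      intro hsub
      cases r with
      | nil => simp at hro
      | @cons _ w _ h' r' =>
        have hvw : s(v, w) ∉ colorClass G f t := by
          have := hra.1
          simpa using this
        have hvc : s(v, w) ∈ c.edges := (hCc _).1 (by simp)
        have hg' : s(v, w) ∈ colorClass G g t := ((hcd _ hvc).resolve_left (fun h => hvw h.1)).1
        refine hvw (hsub ⟨?_, hg'⟩).1
        rw [h3, Set.mem_symmDiff, hmem]
        exact Or.inr ⟨hvc, hvw⟩

end EdgeTrans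
end

section
/- Let q ≥ 3 be an integer and let G be a graph in A(q) with maximum degree t ≥ q+2. If f and g are two different proper t-edge-colorings of G and the subgraph G(f,g,t) has a component C which is a cycle containing a cutvertex of G, then there is a proper t-edge-coloring f̄ of G such that f̄ is (q+1)-equivalent to f and |M(f̄,t) ∩ M(g,t)| > |M(f,t) ∩ M(g,t)|. -/
/-!
Let `C` be the cycle component of `G(f,g,t)`. Its edges alternate between `M(f,t)` and `M(g,t)`,
so it is enough to find a coloring, `(q+1)`-equivalent to `f`, whose color class `t` is
`M(f,t) △ E(C)`.

*Choosing a side.* Let `a` be the cutvertex on `C` and `K` the subgraph of all edges on the side of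
`a` that contains `C` (`sideGraph`, `exists_side`). Some edge `az` lies outside `K`, so its color
`f(az)` is missing at `a` in `K`, and it is not `t`, because `C` has an edge colored `t` at `a`.

*Shifting `t` along the cycle* (`exists_shift`, applied to `K`). Start at `a` with the edge of `C`
colored `t` and uncolor it; one of its ends misses `t`, the other misses a color `s ≠ t`. The color
`t` is now moved along `C`, two edges at a time, through virtual colorings with exactly one
uncolored edge, one end of which misses `t` while the other misses some `s ≠ t`. Each virtual
coloring `φ` is realized by a genuine coloring: the edges whose colors lie in a set `T` of `q` colors
containing `s` and `t`, together with the uncolored edge, have maximum degree at most `q`, so they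
can be recolored with `T` since `G` is in `𝒜(q)` (`exists_fill`). A virtual move uncolors the next
edge, of color `d`, and fills the uncolored one within a set `S` of `q` colors that avoids `t` and
contains `d` and `T \ {t}`; this again uses `𝒜(q)`, and leaves the color class `t` alone
(`Stage.succ_of_even`). The next realization uses `q` colors of `S ∪ {t}`, so consecutive genuine
colorings differ only in the `q + 1` colors of `S ∪ {t}`. When the uncolored edge is the last edge of
the cycle, both of its ends miss `t`, and it receives `t`.

*Going back to `G`* (`extend_steps`). A step on `K` that changes only colors of a set `T` keeps the
number of colors of `T` occurring on edges of `K` at `a`. Hence a permutation of `T`, applied to the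
edges outside `K`, turns it into a step on `G` (`Step.lift`). After all steps the colors outside `K`
have been permuted by some `π`, and one swap of `π t` and `t` outside `K` restores the color class
`t` there; it is compatible with `K` because neither color occurs outside `K` at `a`.
-/

open SimpleGraph Set

namespace EdgeTrans

universe u v

variable {V : Type*} {W : Type*}

/-! ### Filling an uncolored edge and transformation steps -/

lemma proper_inj {G : SimpleGraph V} {t : ℕ} {φ : Sym2 V → ℕ} (h : IsProperEdgeColoring G t φ)
    {e₁ e₂ : Sym2 V} (h₁ : e₁ ∈ G.edgeSet) (h₂ : e₂ ∈ G.edgeSet) {x : V} (hx₁ : x ∈ e₁)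
    (hx₂ : x ∈ e₂) (he : φ e₁ = φ e₂) : e₁ = e₂ := by
  by_contra hne
  exact h.2 e₁ h₁ e₂ h₂ hne ⟨x, hx₁, hx₂⟩ he

/-- The only use of the class `𝒜(q)`: if an edge `uv` is uncolored, and the set `T` of `q` colors
contains a color missing at `u` and a color missing at `v`, then the edges with colors in `T`
together with `uv` form a subgraph of maximum degree at most `q`, which can be recolored with the
colors of `T`. -/
lemma exists_fill [Fintype V] {q t : ℕ} {G K : SimpleGraph V} (hA : MemA q G) (hKG : K ≤ G)
    {u v : V} (huv : K.Adj u v) {φ : Sym2 V → ℕ}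
    (hφ : IsProperEdgeColoring (K.deleteEdges {s(u, v)}) t φ)
    {T : Finset ℕ} (hT : T.card = q) (hTt : T ⊆ Finset.Icc 1 t) {su sv : ℕ}
    (hsu : su ∈ T) (hsv : sv ∈ T)
    (hmu : MissingAt (K.deleteEdges {s(u, v)}) φ su u)
    (hmv : MissingAt (K.deleteEdges {s(u, v)}) φ sv v) :
    ∃ ψ, IsProperEdgeColoring K t ψ ∧ ψ s(u, v) ∈ T ∧
      ∀ h ∈ K.edgeSet, h ≠ s(u, v) → φ h ≠ ψ h → φ h ∈ T ∧ ψ h ∈ T := by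
  classical
  set E := s(u, v) with hE
  have hne : u ≠ v := huv.ne
  have hmem : ∀ h, h ∈ (K.deleteEdges {E}).edgeSet ↔ h ∈ K.edgeSet ∧ h ≠ E := by
    intro h; simp
  let H : SimpleGraph V :=
    SimpleGraph.fromEdgeSet {h | h ∈ K.edgeSet ∧ (h = E ∨ φ h ∈ T)}
  have hH : ∀ h, h ∈ H.edgeSet ↔ h ∈ K.edgeSet ∧ (h = E ∨ φ h ∈ T) := by
    intro h
    simp only [H, SimpleGraph.edgeSet_fromEdgeSet, Set.mem_sdiff, Set.mem_ofPred_eq]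
    constructor
    · exact fun h => h.1
    · exact fun h' => ⟨h', fun hd => K.not_isDiag_of_mem_edgeSet h'.1 hd⟩
  have hHK : H ≤ K := by
    intro a b hab
    exact ((hH s(a, b)).1 hab).1
  have hdeg : maxDeg H ≤ q := by
    refine ciSup_le' fun x => ?_
    -- The neighbors of `x` are coded by colors of `T`: the edge `uv` uses the missing color.
    let F : V → ℕ := fun w => if s(x, w) = E then (if x = u then su else sv) else φ s(x, w)
    have hcard : (H.neighborSet x).ncard ≤ (T : Set ℕ).ncard := by
      refine Set.ncard_le_ncard_of_injOn F ?_ ?_ (Finset.finite_toSet T)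
      · intro w hw
        have := (hH s(x, w)).1 hw
        simp only [F, Finset.mem_coe]
        split_ifs
        · exact hsu
        · exact hsv
        · tauto
      · have key : ∀ w w', H.Adj x w → H.Adj x w' → s(x, w) = E → s(x, w') ≠ E →
            F w ≠ F w' := by
          intro w w' hw hw' h1 h2 heq
          have hw'K : s(x, w') ∈ (K.deleteEdges {E}).edgeSet := (hmem _).2 ⟨hHK hw', h2⟩
          simp only [F, h1, h2, if_true, if_false] at heq
          have hx : x = u ∨ x = v := by
            have : x ∈ E := h1 ▸ Sym2.mem_mk_left x w
            simpa [hE] using this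
          rcases hx with rfl | rfl
          · exact hmu _ hw'K (Sym2.mem_mk_left _ _) (by simpa using heq.symm)
          · exact hmv _ hw'K (Sym2.mem_mk_left _ _) (by simpa [hne.symm] using heq.symm)
        intro w hw w' hw' heq
        by_cases h1 : s(x, w) = E <;> by_cases h2 : s(x, w') = E
        · exact Sym2.congr_right.1 (h1.trans h2.symm)
        · exact absurd heq (key w w' hw hw' h1 h2)
        · exact absurd heq.symm (key w' w hw' hw h2 h1)
        · simp only [F, h1, h2, if_false] at heq
          exact Sym2.congr_right.1 (proper_inj hφ ((hmem _).2 ⟨hHK hw, h1⟩)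
            ((hmem _).2 ⟨hHK hw', h2⟩) (Sym2.mem_mk_left _ _) (Sym2.mem_mk_left _ _) heq)
    simpa [deg, hT, Set.ncard_coe_finset] using hcard
  obtain ⟨θ, hθ⟩ := hA H (hHK.trans hKG) hdeg
  -- Rename the colors `1, …, q` to the colors of `T`.
  have hcq : (Finset.Icc 1 q).card = T.card := by simp [hT]
  let ρ := Finset.equivOfCardEq hcq
  let r : ℕ → ℕ := fun j => if hj : j ∈ Finset.Icc 1 q then (ρ ⟨j, hj⟩ : ℕ) else 0
  have hrT : ∀ j ∈ Finset.Icc 1 q, r j ∈ T := by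
    intro j hj; simp only [r, dif_pos hj]; exact (ρ ⟨j, hj⟩).2
  have hrinj : ∀ i ∈ Finset.Icc 1 q, ∀ j ∈ Finset.Icc 1 q, r i = r j → i = j := by
    intro i hi j hj hij
    simp only [r, dif_pos hi, dif_pos hj] at hij
    simpa using ρ.injective (Subtype.ext hij)
  let ψ : Sym2 V → ℕ := fun h => if h ∈ H.edgeSet then r (θ h) else φ h
  have hψH : ∀ h ∈ H.edgeSet, ψ h ∈ T := by
    intro h hh; simp only [ψ, if_pos hh]; exact hrT _ (hθ.1 h hh)
  have hψ' : ∀ h ∈ K.edgeSet, h ∉ H.edgeSet → h ≠ E ∧ φ h ∉ T ∧ ψ h = φ h := by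
    intro h hK hh
    have := (hH h).not.1 hh
    simp only [ψ, if_neg hh]
    tauto
  refine ⟨ψ, ⟨?_, ?_⟩, hψH _ ((hH _).2 ⟨huv, Or.inl rfl⟩), ?_⟩
  · intro h hK
    by_cases hh : h ∈ H.edgeSet
    · exact hTt (hψH h hh)
    · obtain ⟨h1, h2, h3⟩ := hψ' h hK hh
      rw [h3]; exact hφ.1 h ((hmem h).2 ⟨hK, h1⟩)
  · intro e₁ h₁ e₂ h₂ hne hx heq
    by_cases hh₁ : e₁ ∈ H.edgeSet <;> by_cases hh₂ : e₂ ∈ H.edgeSet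
    · refine hθ.2 e₁ hh₁ e₂ hh₂ hne hx ?_
      simp only [ψ, if_pos hh₁, if_pos hh₂] at heq
      exact hrinj _ (hθ.1 _ hh₁) _ (hθ.1 _ hh₂) heq
    · obtain ⟨-, h2, h3⟩ := hψ' e₂ h₂ hh₂
      exact h2 (h3 ▸ heq ▸ hψH e₁ hh₁)
    · obtain ⟨-, h2, h3⟩ := hψ' e₁ h₁ hh₁
      exact h2 (h3 ▸ heq ▸ hψH e₂ hh₂)
    · obtain ⟨h1, h2, h3⟩ := hψ' e₁ h₁ hh₁
      obtain ⟨h1', h2', h3'⟩ := hψ' e₂ h₂ hh₂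
      rw [h3, h3'] at heq
      exact hφ.2 e₁ ((hmem _).2 ⟨h₁, h1⟩) e₂ ((hmem _).2 ⟨h₂, h1'⟩) hne hx heq
  · intro h hK hhE hd
    by_cases hh : h ∈ H.edgeSet
    · exact ⟨((hH h).1 hh).2.resolve_left hhE, hψH h hh⟩
    · exact absurd (hψ' h hK hh).2.2.symm hd

/-- One transformation step: a proper coloring `φ` is replaced by a proper coloring `ψ`, and the
edges whose color changes have their old and new color in a set `T` of at most `n` colors. -/
def Step (G : SimpleGraph V) (t n : ℕ) (φ ψ : Sym2 V → ℕ) : Prop :=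
  IsProperEdgeColoring G t ψ ∧ ∃ T : Finset ℕ, T.card ≤ n ∧ T ⊆ Finset.Icc 1 t ∧
    ∀ h ∈ G.edgeSet, φ h ≠ ψ h → φ h ∈ T ∧ ψ h ∈ T

lemma Step.differAtMost {G : SimpleGraph V} {t n : ℕ} {φ ψ : Sym2 V → ℕ} (h : Step G t n φ ψ) :
    DifferAtMost G n ψ φ := by
  obtain ⟨-, T, hT, -, hd⟩ := h
  refine le_trans ?_ hT
  rw [← Set.ncard_coe_finset]
  refine Set.ncard_le_ncard ?_ (Finset.finite_toSet T)
  intro j hj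
  by_contra hjT
  apply hj
  ext e
  simp only [colorClass, Set.mem_ofPred_eq, Finset.mem_coe] at hjT ⊢
  refine and_congr_right fun he => ?_
  by_cases hc : φ e = ψ e
  · rw [hc]
  · have := hd e he hc
    constructor
    · rintro rfl; exact absurd this.2 hjT
    · rintro rfl; exact absurd this.1 hjT

lemma nequiv_of_steps {G : SimpleGraph V} {t n : ℕ} {φ ψ : Sym2 V → ℕ}
    (hφ : IsProperEdgeColoring G t φ) (h : Relation.ReflTransGen (Step G t n) φ ψ) :
    NEquiv G t n ψ φ := by
  induction h with
  | refl =>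
    exact ⟨1, fun _ => φ, le_rfl, rfl, rfl, fun _ _ => hφ, fun _ _ => by simp [DifferAtMost]⟩
  | @tail ψ ψ' _ hs ih =>
    obtain ⟨k, F, hk, h0, hF, hp, hd⟩ := ih
    refine ⟨k + 1, fun i => Nat.casesOn i ψ' F, by omega, rfl, hF, ?_, ?_⟩
    · rintro (_ | i) hi
      · exact hs.1
      · exact hp i (by omega)
    · rintro (_ | i) hi
      · simpa [h0] using hs.differAtMost
      · exact hd i (by omega)


/-! ### Shifting a color along a cycle -/

lemma IsProperEdgeColoring.mono {G K : SimpleGraph V} {t : ℕ} {φ : Sym2 V → ℕ}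
    (h : IsProperEdgeColoring G t φ) (hKG : K ≤ G) : IsProperEdgeColoring K t φ :=
  have hs := SimpleGraph.edgeSet_mono hKG
  ⟨fun e he => h.1 e (hs he), fun e₁ h₁ e₂ h₂ => h.2 e₁ (hs h₁) e₂ (hs h₂)⟩

lemma MissingAt.mono {G K : SimpleGraph V} {φ : Sym2 V → ℕ} {i : ℕ} {x : V}
    (h : MissingAt G φ i x) (hKG : K ≤ G) : MissingAt K φ i x :=
  fun e he => h e (SimpleGraph.edgeSet_mono hKG he)

/-- Recoloring within the colors of `S` does not change the number of colors of `S` present at a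
vertex, so some color of `S` is still missing. -/
lemma exists_missing_s10 {K : SimpleGraph V} {φ ψ : Sym2 V → ℕ} {x : V} {S : Finset ℕ} {d : ℕ}
    (hinj : ∀ h₁ ∈ K.edgeSet, ∀ h₂ ∈ K.edgeSet, x ∈ h₁ → x ∈ h₂ → φ h₁ = φ h₂ → h₁ = h₂)
    (hd : d ∈ S) (hm : MissingAt K φ d x)
    (hag : ∀ h ∈ K.edgeSet, x ∈ h → φ h ≠ ψ h → φ h ∈ S ∧ ψ h ∈ S) :
    ∃ s ∈ S, MissingAt K ψ s x := by
  classical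
  by_contra hcon
  have h1 : ∀ s : S, ∃ h ∈ K.edgeSet, x ∈ h ∧ ψ h = s := by
    rintro ⟨s, hs⟩
    by_contra h2
    refine hcon ⟨s, hs, fun e he hx heq => h2 ⟨e, he, hx, heq⟩⟩
  choose η hηK hηx hη using h1
  have hmaps : ∀ s ∈ (Finset.univ : Finset S), φ (η s) ∈ S.erase d := by
    intro s _
    refine Finset.mem_erase.2 ⟨hm _ (hηK s) (hηx s), ?_⟩
    by_cases hc : φ (η s) = ψ (η s)
    · rw [hc, hη]; exact s.2
    · exact (hag _ (hηK s) (hηx s) hc).1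
  have hcard : (S.erase d).card < (Finset.univ : Finset S).card := by
    rw [Finset.card_univ, Fintype.card_coe]
    exact Finset.card_erase_lt_of_mem hd
  obtain ⟨s, -, s', -, hss, heq⟩ := Finset.exists_ne_map_eq_of_card_lt_of_maps_to hcard hmaps
  apply hss
  have := hinj _ (hηK s) _ (hηK s') (hηx s) (hηx s') heq
  exact Subtype.ext (by rw [← hη s, ← hη s', this])

/-- The `i`-th edge of the closed vertex sequence `x`. -/
abbrev ed (x : ℕ → V) (i : ℕ) : Sym2 V := s(x i, x (i + 1))

/-- The intermediate stage of shifting the color `t` along the sequence of edges `ed x i`, where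
originally (in `f`) exactly those with even `i` are colored `t`. The virtual coloring `φ` leaves
the edge `ed x j` uncolored; before it, the color `t` has already been moved to the odd positions,
and after it and off the sequence the color class `t` is that of `f`. One end of the uncolored
edge misses `t` and the other misses `s`. The genuine proper coloring `F` of `G`, reachable from
`f`, agrees with `φ` up to recoloring within a set `T ∋ s, t` of `q` colors. -/
structure Stage (G : SimpleGraph V) (q t : ℕ) (f : Sym2 V → ℕ) (x : ℕ → V) (j : ℕ)
    (φ F : Sym2 V → ℕ) (s : ℕ) (T : Finset ℕ) : Prop where
  reach : Relation.ReflTransGen (Step G t (q + 1)) f F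
  properF : IsProperEdgeColoring G t F
  proper : IsProperEdgeColoring (G.deleteEdges {ed x j}) t φ
  card : T.card = q
  sub : T ⊆ Finset.Icc 1 t
  t_mem : t ∈ T
  s_mem : s ∈ T
  s_ne : s ≠ t
  agree : ∀ h ∈ G.edgeSet, h ≠ ed x j → φ h ≠ F h → φ h ∈ T ∧ F h ∈ T
  F_mem : F (ed x j) ∈ T
  miss_even : Even j → MissingAt (G.deleteEdges {ed x j}) φ s (x j) ∧
    MissingAt (G.deleteEdges {ed x j}) φ t (x (j + 1))
  miss_odd : ¬ Even j → MissingAt (G.deleteEdges {ed x j}) φ t (x j) ∧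
    MissingAt (G.deleteEdges {ed x j}) φ s (x (j + 1))
  old : ∀ i < j, (φ (ed x i) = t ↔ ¬ Even i)
  out : ∀ h ∈ G.edgeSet, (∀ i ≤ j, h ≠ ed x i) → (φ h = t ↔ f h = t)

lemma mem_edgeSet_del {G : SimpleGraph V} {e h : Sym2 V} :
    h ∈ (G.deleteEdges {e}).edgeSet ↔ h ∈ G.edgeSet ∧ h ≠ e := by
  simp

lemma update_proper [DecidableEq (Sym2 V)] {G : SimpleGraph V} {t c : ℕ} {u v : V}
    {φ : Sym2 V → ℕ}
    (hφ : IsProperEdgeColoring (G.deleteEdges {s(u, v)}) t φ) (hc : c ∈ Finset.Icc 1 t)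
    (hu : MissingAt (G.deleteEdges {s(u, v)}) φ c u)
    (hv : MissingAt (G.deleteEdges {s(u, v)}) φ c v) :
    IsProperEdgeColoring G t (Function.update φ s(u, v) c) := by
  have key : ∀ h ∈ G.edgeSet, h ≠ s(u, v) → (∃ x, x ∈ s(u, v) ∧ x ∈ h) → φ h ≠ c := by
    rintro h hh hne ⟨x, hx, hxh⟩
    rcases Sym2.mem_iff.1 hx with rfl | rfl
    · exact hu h (mem_edgeSet_del.2 ⟨hh, hne⟩) hxh
    · exact hv h (mem_edgeSet_del.2 ⟨hh, hne⟩) hxh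
  constructor
  · intro h hh
    by_cases he : h = s(u, v)
    · subst he; simpa using hc
    · rw [Function.update_of_ne he]
      exact hφ.1 h (mem_edgeSet_del.2 ⟨hh, he⟩)
  · rintro e₁ h₁ e₂ h₂ hne ⟨x, hx₁, hx₂⟩
    by_cases he₁ : e₁ = s(u, v)
    · subst he₁
      rw [Function.update_self, Function.update_of_ne hne.symm]
      exact (key e₂ h₂ hne.symm ⟨x, hx₁, hx₂⟩).symm
    · by_cases he₂ : e₂ = s(u, v)
      · subst he₂
        rw [Function.update_self, Function.update_of_ne hne]
        exact key e₁ h₁ hne ⟨x, hx₂, hx₁⟩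
      · rw [Function.update_of_ne he₁, Function.update_of_ne he₂]
        exact hφ.2 e₁ (mem_edgeSet_del.2 ⟨h₁, he₁⟩) e₂ (mem_edgeSet_del.2 ⟨h₂, he₂⟩) hne
          ⟨x, hx₁, hx₂⟩

/-- From an odd to an even stage: the uncolored edge receives `t` and the next edge, so far
colored `t`, becomes uncolored. The genuine coloring is not changed. -/
lemma Stage.succ_of_odd {q t n : ℕ} {G : SimpleGraph V} {f : Sym2 V → ℕ} {x : ℕ → V}
    (hadj : ∀ i < n, G.Adj (x i) (x (i + 1)))
    (hinj : ∀ i < n, ∀ j < n, ed x i = ed x j → i = j)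
    (hfe : ∀ i < n, Even i → f (ed x i) = t)
    {j : ℕ} (hj : j + 1 < n) {φ F : Sym2 V → ℕ} {s : ℕ} {T : Finset ℕ}
    (h : Stage G q t f x j φ F s T) (hodd : ¬ Even j) :
    ∃ φ', Stage G q t f x (j + 1) φ' F s T := by
  classical
  have hne : ed x (j + 1) ≠ ed x j := fun he => by
    have := hinj _ hj _ (by omega) he; omega
  have hE1 : ed x (j + 1) ∈ G.edgeSet := hadj _ hj
  have hE : ed x j ∈ G.edgeSet := hadj _ (by omega)
  have heven : Even (j + 1) := by grind
  have ht1 : φ (ed x (j + 1)) = t := by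
    refine (h.out _ hE1 fun i hi he => ?_).2 (hfe _ hj heven)
    have := hinj _ hj _ (by omega) he; omega
  have hE1' := mem_edgeSet_del.2 ⟨hE1, hne⟩
  obtain ⟨hmt, hms⟩ := h.miss_odd hodd
  -- The only edge colored `t` at the common vertex, or at the far end, is `ed x (j + 1)`.
  have honly : ∀ y ∈ ed x (j + 1), ∀ e ∈ G.edgeSet, e ≠ ed x j → e ≠ ed x (j + 1) → y ∈ e →
      φ e ≠ t := fun y hy e he h1 h2 hye heq =>
    h2 (proper_inj h.proper (mem_edgeSet_del.2 ⟨he, h1⟩) hE1' hye hy (heq.trans ht1.symm))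
  have hxj : x (j + 2) ∉ ed x j := by
    intro hm
    rcases Sym2.mem_iff.1 hm with he | he
    · exact hne (by simp only [ed]; rw [show j + 1 + 1 = j + 2 from rfl, he, Sym2.eq_swap])
    · exact (hadj _ hj).ne he.symm
  refine ⟨Function.update φ (ed x j) t, h.reach, h.properF, ?_, h.card, h.sub, h.t_mem, h.s_mem,
    h.s_ne, ?_, ?_, ?_, fun hc => absurd heven hc, ?_, ?_⟩
  · refine update_proper (G := G.deleteEdges {ed x (j + 1)})
      (h.proper.mono ?_) (h.sub h.t_mem) (hmt.mono ?_) ?_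
    · exact SimpleGraph.deleteEdges_mono (SimpleGraph.deleteEdges_le _)
    · exact SimpleGraph.deleteEdges_mono (SimpleGraph.deleteEdges_le _)
    · intro e he hxe
      obtain ⟨he, h1⟩ := mem_edgeSet_del.1 he
      obtain ⟨he, h2⟩ := mem_edgeSet_del.1 he
      exact honly _ (Sym2.mem_mk_left _ _) e he h1 h2 hxe
  · intro e he hne1 hd
    by_cases h1 : e = ed x j
    · subst h1
      rw [Function.update_self]
      exact ⟨h.t_mem, h.F_mem⟩
    · rw [Function.update_of_ne h1] at hd ⊢
      exact h.agree e he h1 hd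
  · by_cases hc : F (ed x (j + 1)) = t
    · rw [hc]; exact h.t_mem
    · exact (h.agree _ hE1 hne (by rw [ht1]; exact Ne.symm hc)).2
  · intro _
    constructor
    · intro e he hxe
      obtain ⟨he, h1⟩ := mem_edgeSet_del.1 he
      by_cases h2 : e = ed x j
      · subst h2; rw [Function.update_self]; exact h.s_ne.symm
      · rw [Function.update_of_ne h2]
        exact hms e (mem_edgeSet_del.2 ⟨he, h2⟩) hxe
    · intro e he hxe
      obtain ⟨he, h1⟩ := mem_edgeSet_del.1 he
      by_cases h2 : e = ed x j
      · subst h2; exact absurd hxe hxj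
      · rw [Function.update_of_ne h2]
        exact honly _ (Sym2.mem_mk_right _ _) e he h2 h1 hxe
  · intro i hi
    by_cases h1 : i = j
    · subst h1; simp [hodd]
    · rw [Function.update_of_ne (fun he => h1 (hinj _ (by omega) _ (by omega) he))]
      exact h.old i (by omega)
  · intro e he hall
    rw [Function.update_of_ne (hall j (by omega))]
    exact h.out e he fun i hi => hall i (by omega)

/-- From an even to an odd stage: the next edge, of color `d ≠ t`, becomes uncolored, and the
uncolored edge is filled within `q` colors other than `t`, among which are `d` and the colors of
`T` other than `t`. Passing to the new genuine coloring changes only these `q` colors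
and `t`. -/
lemma Stage.succ_of_even [Fintype V] {q t n : ℕ} (hq : 2 ≤ q) (htq : q + 1 ≤ t)
    {G : SimpleGraph V} (hA : MemA q G) {f : Sym2 V → ℕ} {x : ℕ → V}
    (hadj : ∀ i < n, G.Adj (x i) (x (i + 1)))
    (hinj : ∀ i < n, ∀ j < n, ed x i = ed x j → i = j)
    {j : ℕ} (hj : j + 1 < n) {φ F : Sym2 V → ℕ} {s : ℕ} {T : Finset ℕ}
    (h : Stage G q t f x j φ F s T) (heven : Even j) :
    ∃ φ' F' s' T', Stage G q t f x (j + 1) φ' F' s' T' := by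
  classical
  have hne : ed x (j + 1) ≠ ed x j := fun he => by
    have := hinj _ hj _ (by omega) he; omega
  have hE1 : ed x (j + 1) ∈ G.edgeSet := hadj _ hj
  have hE : ed x j ∈ G.edgeSet := hadj _ (by omega)
  have hodd : ¬ Even (j + 1) := by grind
  have hE1' := mem_edgeSet_del.2 ⟨hE1, hne⟩
  obtain ⟨hms, hmt⟩ := h.miss_even heven
  set d := φ (ed x (j + 1)) with hd
  have hdt : d ≠ t := hmt _ hE1' (Sym2.mem_mk_left _ _)
  have hdI : d ∈ Finset.Icc 1 t := h.proper.1 _ hE1'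
  have hxj : x (j + 2) ∉ ed x j := by
    intro hm
    rcases Sym2.mem_iff.1 hm with he | he
    · exact hne (by simp only [ed]; rw [show j + 1 + 1 = j + 2 from rfl, he, Sym2.eq_swap])
    · exact (hadj _ hj).ne he.symm
  -- the set `S` of `q` colors other than `t`
  obtain ⟨S, hS1, hS2, hSq⟩ : ∃ S, insert d (T.erase t) ⊆ S ∧ S ⊆ (Finset.Icc 1 t).erase t ∧
      S.card = q := by
    refine Finset.exists_subsuperset_card_eq ?_ ?_ ?_
    · intro c hc
      rcases Finset.mem_insert.1 hc with rfl | hc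
      · exact Finset.mem_erase.2 ⟨hdt, hdI⟩
      · exact Finset.erase_subset_erase _ h.sub hc
    · refine (Finset.card_insert_le _ _).trans ?_
      rw [Finset.card_erase_of_mem h.t_mem, h.card]; omega
    · rw [Finset.card_erase_of_mem (h.sub h.t_mem), Nat.card_Icc]; omega
  have htS : t ∉ S := fun hc => by simpa using hS2 hc
  have hSI : S ⊆ Finset.Icc 1 t := fun c hc => Finset.mem_of_mem_erase (hS2 hc)
  have hdS : d ∈ S := hS1 (Finset.mem_insert_self _ _)
  have hTS : ∀ c ∈ T, c ∈ insert t S := by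
    intro c hc
    by_cases hct : c = t
    · simp [hct]
    · exact Finset.mem_insert_of_mem
        (hS1 (Finset.mem_insert_of_mem (Finset.mem_erase.2 ⟨hct, hc⟩)))
  have hsS : s ∈ S := (Finset.mem_insert.1 (hTS s h.s_mem)).resolve_left h.s_ne
  -- fill the edge `ed x j` in the graph without `ed x (j + 1)`
  have hle : (G.deleteEdges {ed x (j + 1)}).deleteEdges {ed x j} ≤ G.deleteEdges {ed x j} :=
    SimpleGraph.deleteEdges_mono (SimpleGraph.deleteEdges_le _)
  have hmd : MissingAt ((G.deleteEdges {ed x (j + 1)}).deleteEdges {ed x j}) φ d (x (j + 1)) := by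
    intro e he hxe heq
    obtain ⟨he, h1⟩ := mem_edgeSet_del.1 he
    obtain ⟨he, h2⟩ := mem_edgeSet_del.1 he
    exact h2 (proper_inj h.proper (mem_edgeSet_del.2 ⟨he, h1⟩) hE1' hxe (Sym2.mem_mk_left _ _) heq)
  obtain ⟨φ', hφ', hφ'E, hφ'a⟩ := exists_fill hA (SimpleGraph.deleteEdges_le _)
    (show (G.deleteEdges {ed x (j + 1)}).Adj (x j) (x (j + 1)) from
      mem_edgeSet_del.2 ⟨hE, hne.symm⟩)
    (h.proper.mono hle) hSq hSI hsS hdS (hms.mono hle) hmd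
  have hφ't : ∀ e ∈ G.edgeSet, e ≠ ed x j → e ≠ ed x (j + 1) → (φ' e = t ↔ φ e = t) := by
    intro e he h1 h2
    by_cases hc : φ e = φ' e
    · rw [hc]
    · obtain ⟨h3, h4⟩ := hφ'a e (mem_edgeSet_del.2 ⟨he, h2⟩) h1 hc
      exact ⟨fun hh => absurd (hh ▸ h4) htS, fun hh => absurd (hh ▸ h3) htS⟩
  -- some color of `S` is now missing at the far end of `ed x (j + 1)`
  obtain ⟨s', hs'S, hs'⟩ : ∃ s' ∈ S, MissingAt (G.deleteEdges {ed x (j + 1)}) φ' s'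
      (x (j + 2)) := by
    have hoff : ∀ e ∈ (G.deleteEdges {ed x (j + 1)}).edgeSet, x (j + 2) ∈ e →
        e ∈ (G.deleteEdges {ed x j}).edgeSet := fun e he hxe =>
      mem_edgeSet_del.2 ⟨(mem_edgeSet_del.1 he).1, fun hc => hxj (hc ▸ hxe)⟩
    refine exists_missing_s10 (φ := φ) ?_ hdS ?_ ?_
    · intro e₁ h₁ e₂ h₂ hx₁ hx₂ heq
      exact proper_inj h.proper (hoff _ h₁ hx₁) (hoff _ h₂ hx₂) hx₁ hx₂ heq
    · intro e he hxe heq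
      exact (mem_edgeSet_del.1 he).2
        (proper_inj h.proper (hoff _ he hxe) hE1' hxe (Sym2.mem_mk_right _ _) heq)
    · intro e he hxe hc
      exact hφ'a e he (fun hc' => hxj (by rw [hc'] at hxe; exact hxe)) hc
  have hs't : s' ≠ t := fun hc => htS (hc ▸ hs'S)
  -- at the common vertex the color `t` is still missing
  have hmt' : MissingAt (G.deleteEdges {ed x (j + 1)}) φ' t (x (j + 1)) := by
    intro e he hxe heq
    obtain ⟨he, h1⟩ := mem_edgeSet_del.1 he
    by_cases h2 : e = ed x j
    · subst h2; exact htS (heq ▸ hφ'E)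
    · exact hmt e (mem_edgeSet_del.2 ⟨he, h2⟩) hxe ((hφ't e he h2 h1).1 heq)
  obtain ⟨T', hT1, hT2, hTq⟩ : ∃ T' : Finset ℕ, {s', t} ⊆ T' ∧ T' ⊆ insert t S ∧
      T'.card = q := by
    refine Finset.exists_subsuperset_card_eq ?_ (Finset.card_le_two.trans hq) ?_
    · intro c hc
      rcases Finset.mem_insert.1 hc with rfl | hc
      · exact Finset.mem_insert_of_mem hs'S
      · rw [Finset.mem_singleton.1 hc]; exact Finset.mem_insert_self _ _
    · rw [Finset.card_insert_of_notMem htS]; omega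
  have hs'T : s' ∈ T' := hT1 (by simp)
  have htT : t ∈ T' := hT1 (by simp)
  have hSI' : insert t S ⊆ Finset.Icc 1 t :=
    Finset.insert_subset (h.sub h.t_mem) hSI
  have hTI : T' ⊆ Finset.Icc 1 t := hT2.trans hSI'
  obtain ⟨F', hF', hF'E, hF'a⟩ := exists_fill hA le_rfl
    (hadj _ hj) hφ' hTq hTI htT hs'T hmt' hs'
  have hstep : Step G t (q + 1) F F' := by
    refine ⟨hF', insert t S, (Finset.card_insert_le _ _).trans (by omega), hSI', ?_⟩
    have hSins : ∀ c ∈ S, c ∈ insert t S := fun c => Finset.mem_insert_of_mem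
    intro e he hdiff
    by_cases h2 : e = ed x (j + 1)
    · subst h2
      refine ⟨?_, hT2 hF'E⟩
      by_cases hc : φ (ed x (j + 1)) = F (ed x (j + 1))
      · rw [← hc]; exact hSins _ hdS
      · exact hTS _ (h.agree _ hE1 hne hc).2
    · have hA2 := hF'a e he h2
      by_cases h1 : e = ed x j
      · subst h1
        refine ⟨hTS _ h.F_mem, ?_⟩
        by_cases hc : φ' (ed x j) = F' (ed x j)
        · rw [← hc]; exact hSins _ hφ'E
        · exact hT2 (hA2 hc).2
      · have hA0 := h.agree e he h1
        have hA1 := hφ'a e (mem_edgeSet_del.2 ⟨he, h2⟩) h1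
        have p0 : φ e ≠ F e → φ e ∈ insert t S ∧ F e ∈ insert t S :=
          fun hc => ⟨hTS _ (hA0 hc).1, hTS _ (hA0 hc).2⟩
        have p1 : φ e ≠ φ' e → φ e ∈ insert t S ∧ φ' e ∈ insert t S :=
          fun hc => ⟨hSins _ (hA1 hc).1, hSins _ (hA1 hc).2⟩
        have p2 : φ' e ≠ F' e → φ' e ∈ insert t S ∧ F' e ∈ insert t S :=
          fun hc => ⟨hT2 (hA2 hc).1, hT2 (hA2 hc).2⟩
        clear hA0 hA1 hA2
        grind
  refine ⟨φ', F', s', T', h.reach.tail hstep, hF', hφ', hTq, hTI, htT, hs'T, hs't, ?_, hF'E,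
    fun hc => absurd hc hodd, fun _ => ⟨hmt', hs'⟩, ?_, ?_⟩
  · exact hF'a
  · intro i hi
    by_cases h1 : i = j
    · subst h1
      simp only [heven, not_true, iff_false]
      exact fun hc => htS (hc ▸ hφ'E)
    · rw [hφ't _ (hadj i (by omega)) (fun he => h1 (hinj _ (by omega) _ (by omega) he))
        (fun he => by have := hinj _ (by omega) _ (by omega) he; omega)]
      exact h.old i (by omega)
  · intro e he hall
    rw [hφ't e he (hall j (by omega)) (hall (j + 1) le_rfl)]
    exact h.out e he fun i hi => hall i (by omega)

/-- If a vertex of a `t`-alternating cycle misses some color, then the color `t` can be shifted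
along the cycle: it moves from the even to the odd edges and is unchanged elsewhere. The second
coloring `g` only serves to say that the odd edges form a matching. -/
lemma exists_shift [Fintype V] {q t n : ℕ} (hq : 2 ≤ q) (htq : q + 1 ≤ t)
    {G : SimpleGraph V} (hA : MemA q G) {f g : Sym2 V → ℕ}
    (hf : IsProperEdgeColoring G t f) (hg : IsProperEdgeColoring G t g) {x : ℕ → V}
    (hn : 2 ≤ n) (hneven : Even n) (hxn : x n = x 0)
    (hadj : ∀ i < n, G.Adj (x i) (x (i + 1)))
    (hinj : ∀ i < n, ∀ j < n, ed x i = ed x j → i = j)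
    (hfe : ∀ i < n, Even i → f (ed x i) = t) (hge : ∀ i < n, ¬ Even i → g (ed x i) = t)
    {m : ℕ} (hmI : m ∈ Finset.Icc 1 t) (hmt : m ≠ t) (hm : MissingAt G f m (x 0)) :
    ∃ F, Relation.ReflTransGen (Step G t (q + 1)) f F ∧ IsProperEdgeColoring G t F ∧
      (∀ i < n, (F (ed x i) = t ↔ ¬ Even i)) ∧
      ∀ h ∈ G.edgeSet, (∀ i < n, h ≠ ed x i) → (F h = t ↔ f h = t) := by
  classical
  have htI : t ∈ Finset.Icc 1 t := by simp; omega
  have hstage : ∀ j < n, ∃ φ F s T, Stage G q t f x j φ F s T := by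
    intro j
    induction j with
    | zero =>
      intro h0
      have hE0 : ed x 0 ∈ G.edgeSet := hadj 0 h0
      have hf0 : f (ed x 0) = t := hfe 0 h0 (by simp)
      obtain ⟨T, hT1, hT2, hTq⟩ : ∃ T : Finset ℕ, {m, t} ⊆ T ∧ T ⊆ Finset.Icc 1 t ∧
          T.card = q := by
        refine Finset.exists_subsuperset_card_eq ?_ (Finset.card_le_two.trans hq) ?_
        · intro c hc
          rcases Finset.mem_insert.1 hc with rfl | hc
          · exact hmI
          · rw [Finset.mem_singleton.1 hc]; exact htI
        · simp; omega
      have htT : t ∈ T := hT1 (by simp)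
      refine ⟨f, f, m, T, Relation.ReflTransGen.refl, hf,
        hf.mono (SimpleGraph.deleteEdges_le _), hTq, hT2, htT, hT1 (by simp), hmt,
        fun _ _ _ hc => absurd rfl hc, hf0 ▸ htT, fun _ => ⟨?_, ?_⟩,
        fun hc => absurd (by simp) hc, fun i hi => absurd hi (by omega), fun _ _ _ => Iff.rfl⟩
      · exact hm.mono (SimpleGraph.deleteEdges_le _)
      · intro e he hxe heq
        obtain ⟨he, h1⟩ := mem_edgeSet_del.1 he
        exact h1 (proper_inj hf he hE0 hxe (Sym2.mem_mk_right _ _) (heq.trans hf0.symm))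
    | succ j ih =>
      intro hj
      obtain ⟨φ, F, s, T, h⟩ := ih (by omega)
      by_cases hev : Even j
      · exact h.succ_of_even hq htq hA hadj hinj hj hev
      · obtain ⟨φ', h'⟩ := h.succ_of_odd hadj hinj hfe hj hev
        exact ⟨φ', F, s, T, h'⟩
  -- At the last stage both ends of the uncolored edge miss `t`.
  obtain ⟨φ, F, s, T, h⟩ := hstage (n - 1) (by omega)
  have hlast : ¬ Even (n - 1) := by grind
  have hn1 : n - 1 + 1 = n := by omega
  have hEl : ed x (n - 1) ∈ G.edgeSet := hadj _ (by omega)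
  obtain ⟨hmt', -⟩ := h.miss_odd hlast
  have hmem : ∀ i < n, ed x i ∈ G.edgeSet := hadj
  have hm0 : MissingAt (G.deleteEdges {ed x (n - 1)}) φ t (x (n - 1 + 1)) := by
    rw [hn1, hxn]
    intro e he hxe heq
    obtain ⟨he, h1⟩ := mem_edgeSet_del.1 he
    by_cases hall : ∀ i ≤ n - 1, e ≠ ed x i
    · -- an edge off the cycle colored `t` would meet `ed x 0` in `x 0`
      refine hall 0 (by omega) (proper_inj hf he (hmem 0 (by omega)) hxe (Sym2.mem_mk_left _ _) ?_)
      rw [(h.out e he hall).1 heq, hfe 0 (by omega) (by simp)]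
    · push Not at hall
      obtain ⟨i, hi, rfl⟩ := hall
      have hin : i ≠ n - 1 := fun hc => h1 (by rw [hc])
      have hio := (h.old i (by omega)).1 heq
      refine h1 (proper_inj hg he hEl hxe ?_ ?_)
      · rw [← hxn]; simp [ed, hn1]
      · rw [hge i (by omega) hio, hge (n - 1) (by omega) hlast]
  have hfin := update_proper h.proper htI hmt' hm0
  refine ⟨Function.update φ (ed x (n - 1)) t, h.reach.tail ⟨hfin, T, by rw [h.card]; omega, h.sub,
    ?_⟩, hfin, ?_, ?_⟩
  · intro e he hd
    by_cases h1 : e = ed x (n - 1)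
    · subst h1; rw [Function.update_self]; exact ⟨h.F_mem, h.t_mem⟩
    · rw [Function.update_of_ne h1] at hd ⊢
      exact (h.agree e he h1 (Ne.symm hd)).symm
  · intro i hi
    by_cases h1 : i = n - 1
    · subst h1; simp [hlast]
    · rw [Function.update_of_ne (fun he => h1 (hinj _ hi _ (by omega) he))]
      exact h.old i (by omega)
  · intro e he hall
    rw [Function.update_of_ne (hall _ (by omega))]
    exact h.out e he fun i hi => hall i (by omega)


/-! ### The side of a cutvertex and lifting of recolorings -/

/-- The spanning subgraph of `G` formed by the edges having an endpoint in `X`. When `X` is the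
set of vertices on one side of a cutvertex `a`, these are all the edges on that side, including
the ones at `a`. -/
def sideGraph (G : SimpleGraph V) (X : Set V) : SimpleGraph V where
  Adj u w := G.Adj u w ∧ (u ∈ X ∨ w ∈ X)
  symm := ⟨fun _ _ h => ⟨h.1.symm, h.2.symm⟩⟩
  loopless := ⟨fun u h => G.loopless.irrefl u h.1⟩

lemma mem_sideGraph {G : SimpleGraph V} {X : Set V} {e : Sym2 V} :
    e ∈ (sideGraph G X).edgeSet ↔ e ∈ G.edgeSet ∧ ∃ x ∈ e, x ∈ X := by
  induction e with
  | h u w => simp [sideGraph]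

lemma sideGraph_le (G : SimpleGraph V) (X : Set V) : sideGraph G X ≤ G := fun _ _ h => h.1

/-- `K` meets the rest of `G` only in the vertex `a`. -/
def AttachedAt (G K : SimpleGraph V) (a : V) : Prop :=
  ∀ e₁ ∈ K.edgeSet, ∀ e₂ ∈ G.edgeSet, e₂ ∉ K.edgeSet → ∀ x, x ∈ e₁ → x ∈ e₂ → x = a

lemma attachedAt_sideGraph {G : SimpleGraph V} {X : Set V} {a : V}
    (hX : ∀ u ∈ X, ∀ w, G.Adj u w → w ∈ X ∨ w = a) : AttachedAt G (sideGraph G X) a := by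
  intro e₁ h₁ e₂ h₂ h₂' x hx₁ hx₂
  have hxX : x ∉ X := fun h => h₂' (mem_sideGraph.2 ⟨h₂, x, hx₂, h⟩)
  obtain ⟨h₁G, y, hy, hyX⟩ := mem_sideGraph.1 h₁
  have hyx : y ≠ x := fun h => hxX (h ▸ hyX)
  have he : e₁ = s(y, x) := (Sym2.mem_and_mem_iff hyx).1 ⟨hy, hx₁⟩
  rw [he] at h₁G
  exact (hX y hyX x h₁G).resolve_left hxX

open Classical in
/-- A coloring of `K` and a coloring of the rest of `G`, with colors permuted by `σ`, combine to a
proper coloring if they do not conflict at the attachment vertex. -/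
lemma glue {G K : SimpleGraph V} {a : V} (hK : AttachedAt G K a) {t : ℕ}
    {F Φ : Sym2 V → ℕ} (hF : IsProperEdgeColoring K t F) (hΦ : IsProperEdgeColoring G t Φ)
    (σ : Equiv.Perm ℕ) (hσ : ∀ j ∈ Finset.Icc 1 t, σ j ∈ Finset.Icc 1 t)
    (hs : ∀ h ∈ G.edgeSet, h ∉ K.edgeSet → a ∈ h → ∀ e ∈ K.edgeSet, a ∈ e → σ (Φ h) ≠ F e) :
    IsProperEdgeColoring G t (fun e => if e ∈ K.edgeSet then F e else σ (Φ e)) := by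
  refine ⟨fun e he => ?_, fun e₁ h₁ e₂ h₂ hne hx => ?_⟩
  · by_cases hh : e ∈ K.edgeSet
    · simpa only [if_pos hh] using hF.1 e hh
    · simpa only [if_neg hh] using hσ _ (hΦ.1 e he)
  · obtain ⟨x, hx₁, hx₂⟩ := hx
    by_cases hh₁ : e₁ ∈ K.edgeSet <;> by_cases hh₂ : e₂ ∈ K.edgeSet
    · simpa only [if_pos hh₁, if_pos hh₂] using hF.2 _ hh₁ _ hh₂ hne ⟨x, hx₁, hx₂⟩
    · simp only [if_pos hh₁, if_neg hh₂]
      obtain rfl := hK _ hh₁ _ h₂ hh₂ x hx₁ hx₂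
      exact (hs _ h₂ hh₂ hx₂ _ hh₁ hx₁).symm
    · simp only [if_neg hh₁, if_pos hh₂]
      obtain rfl := hK _ hh₂ _ h₁ hh₁ x hx₂ hx₁
      exact hs _ h₁ hh₁ hx₁ _ hh₂ hx₂
    · simp only [if_neg hh₁, if_neg hh₂]
      exact fun h => hΦ.2 _ h₁ _ h₂ hne ⟨x, hx₁, hx₂⟩ (σ.injective h)

/-- A step on `K` with color set `T` extends to a step on `G`: the same number of colors of `T`
occurs on the edges of `K` at the attachment vertex before and after the step, so a permutation of
`T` moves the colors of the remaining edges of `G` out of the way. -/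
lemma Step.lift [Fintype V] {G K : SimpleGraph V} {a : V} (hKG : K ≤ G) (hK : AttachedAt G K a)
    {t n : ℕ} {F F' Φ : Sym2 V → ℕ} (hs : Step K t n F F') (hΦ : IsProperEdgeColoring G t Φ)
    (hΦF : ∀ e ∈ K.edgeSet, Φ e = F e) :
    ∃ (Φ' : Sym2 V → ℕ) (σ : Equiv.Perm ℕ), (∀ j ∈ Finset.Icc 1 t, σ j ∈ Finset.Icc 1 t) ∧
      Step G t n Φ Φ' ∧ (∀ e ∈ K.edgeSet, Φ' e = F' e) ∧
      ∀ h ∈ G.edgeSet, h ∉ K.edgeSet → Φ' h = σ (Φ h) := by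
  classical
  obtain ⟨hF', T, hTn, hTt, hT⟩ := hs
  have hG := SimpleGraph.edgeSet_mono hKG
  let E : Finset (Sym2 V) := Finset.univ.filter fun e => e ∈ K.edgeSet ∧ a ∈ e ∧ Φ e ∈ T
  have hE : ∀ e, e ∈ E ↔ e ∈ K.edgeSet ∧ a ∈ e ∧ Φ e ∈ T := by intro e; simp [E]
  have hET : ∀ e ∈ K.edgeSet, (Φ e ∈ T ↔ F' e ∈ T) := by
    intro e he
    rw [hΦF e he]
    by_cases hd : F e = F' e
    · rw [hd]
    · have := hT e he hd; tauto
  have hA : (E.image Φ).card = E.card := Finset.card_image_of_injOn fun e₁ h₁ e₂ h₂ h =>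
    proper_inj hΦ (hG ((hE _).1 h₁).1) (hG ((hE _).1 h₂).1) ((hE _).1 h₁).2.1
      ((hE _).1 h₂).2.1 h
  have hB : (E.image F').card = E.card := Finset.card_image_of_injOn fun e₁ h₁ e₂ h₂ h =>
    proper_inj hF' ((hE _).1 h₁).1 ((hE _).1 h₂).1 ((hE _).1 h₁).2.1 ((hE _).1 h₂).2.1 h
  have hAT : ∀ j ∈ E.image Φ, j ∈ T := by
    intro j hj
    obtain ⟨e, he, rfl⟩ := Finset.mem_image.1 hj
    exact ((hE e).1 he).2.2
  have hBT : ∀ j ∈ E.image F', j ∈ T := by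
    intro j hj
    obtain ⟨e, he, rfl⟩ := Finset.mem_image.1 hj
    exact (hET e ((hE e).1 he).1).1 ((hE e).1 he).2.2
  obtain ⟨σ₀, hσ₀⟩ := Equiv.Perm.exists_map_finset_eq
    ((E.image Φ).subtype (· ∈ T)) ((E.image F').subtype (· ∈ T)) (by
      rw [Finset.card_subtype, Finset.card_subtype, Finset.filter_true_of_mem hAT,
        Finset.filter_true_of_mem hBT, hA, hB])
  let σ : Equiv.Perm ℕ := Equiv.Perm.ofSubtype σ₀
  have hσT : ∀ j (hj : j ∈ T), σ j = σ₀ ⟨j, hj⟩ := fun j hj =>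
    Equiv.Perm.ofSubtype_apply_of_mem σ₀ hj
  have hσT' : ∀ j, j ∉ T → σ j = j := fun j hj => Equiv.Perm.ofSubtype_apply_of_not_mem σ₀ hj
  have hσmem : ∀ j ∈ T, σ j ∈ T := fun j hj => by rw [hσT j hj]; exact (σ₀ _).2
  have hσI : ∀ j ∈ Finset.Icc 1 t, σ j ∈ Finset.Icc 1 t := by
    intro j hj
    by_cases hjT : j ∈ T
    · exact hTt (hσmem j hjT)
    · rwa [hσT' j hjT]
  have hσB : ∀ j ∈ T, σ j ∈ E.image F' → j ∈ E.image Φ := by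
    intro j hj hjB
    have h1 : σ₀ ⟨j, hj⟩ ∈ (E.image F').subtype (· ∈ T) := by
      rw [Finset.mem_subtype, ← hσT j hj]; exact hjB
    rw [← hσ₀, Finset.mem_map] at h1
    obtain ⟨i, hi, hij⟩ := h1
    have : i = ⟨j, hj⟩ := σ₀.injective hij
    rw [this, Finset.mem_subtype] at hi
    exact hi
  have hprop := glue hK hF' hΦ σ hσI (by
    intro h hh hhK hah e he hae heq
    have hne : ∀ e' ∈ K.edgeSet, a ∈ e' → Φ h ≠ Φ e' := fun e' he' hae' =>
      hΦ.2 _ hh _ (hG he') (fun h' => hhK (h' ▸ he')) ⟨a, hah, hae'⟩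
    by_cases hc : Φ h ∈ T
    · have h1 : e ∈ E := (hE e).2 ⟨he, hae, (hET e he).2 (heq ▸ hσmem _ hc)⟩
      obtain ⟨e', he', hee⟩ := Finset.mem_image.1
        (hσB _ hc (heq ▸ Finset.mem_image_of_mem F' h1))
      exact hne e' ((hE e').1 he').1 ((hE e').1 he').2.1 hee.symm
    · rw [hσT' _ hc] at heq
      have h1 : F e = F' e := by
        by_contra hd
        exact hc (heq ▸ (hT e he hd).2)
      exact hne e he hae (by rw [heq, hΦF e he, h1]))
  refine ⟨_, σ, hσI, ⟨hprop, T, hTn, hTt, ?_⟩, fun e he => by simp only [if_pos he],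
    fun h _ hh => by simp only [if_neg hh]⟩
  intro h _ hd
  by_cases hh : h ∈ K.edgeSet
  · simp only [if_pos hh, hΦF h hh] at hd ⊢
    exact hT h hh hd
  · simp only [if_neg hh] at hd ⊢
    have : Φ h ∈ T := by
      by_contra hc
      exact hd (hσT' _ hc).symm
    exact ⟨this, hσmem _ this⟩

lemma lift_steps [Fintype V] {G K : SimpleGraph V} {a : V} (hKG : K ≤ G) (hK : AttachedAt G K a)
    {t n : ℕ} {f F : Sym2 V → ℕ} (hf : IsProperEdgeColoring G t f)
    (hs : Relation.ReflTransGen (Step K t n) f F) :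
    ∃ (Φ : Sym2 V → ℕ) (π : Equiv.Perm ℕ), (∀ j ∈ Finset.Icc 1 t, π j ∈ Finset.Icc 1 t) ∧
      IsProperEdgeColoring G t Φ ∧ Relation.ReflTransGen (Step G t n) f Φ ∧
      (∀ e ∈ K.edgeSet, Φ e = F e) ∧ ∀ h ∈ G.edgeSet, h ∉ K.edgeSet → Φ h = π (f h) := by
  induction hs with
  | refl => exact ⟨f, 1, fun _ h => h, hf, .refl, fun _ _ => rfl, fun _ _ _ => rfl⟩
  | tail _ hs ih =>
    obtain ⟨Φ, π, hπ, hΦ, hst, hΦK, hΦπ⟩ := ih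
    obtain ⟨Φ', σ, hσ, hs', hK', hσ'⟩ := hs.lift hKG hK hΦ hΦK
    refine ⟨Φ', σ * π, fun j hj => hσ _ (hπ j hj), hs'.1, hst.tail hs', hK', fun h hh hhK => ?_⟩
    rw [hσ' h hh hhK, hΦπ h hh hhK, Equiv.Perm.mul_apply]

/-- If `t` occurs at the attachment vertex on an edge of `K` before and after a recoloring of `K`,
the recoloring extends to `G` without changing the color class `t` outside `K`: after lifting all
the steps, one swap of two colors outside `K` puts the color `t` back in its place. -/
lemma extend_steps [Fintype V] {G K : SimpleGraph V} {a : V} (hKG : K ≤ G)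
    (hK : AttachedAt G K a) {t n : ℕ} (hn : 2 ≤ n) {f F : Sym2 V → ℕ}
    (hf : IsProperEdgeColoring G t f) (hs : Relation.ReflTransGen (Step K t n) f F)
    {e₀ e₁ : Sym2 V} (he₀ : e₀ ∈ K.edgeSet) (hae₀ : a ∈ e₀) (hft : f e₀ = t)
    (he₁ : e₁ ∈ K.edgeSet) (hae₁ : a ∈ e₁) (hFt : F e₁ = t) :
    ∃ fb, IsProperEdgeColoring G t fb ∧ Relation.ReflTransGen (Step G t n) f fb ∧
      (∀ e ∈ K.edgeSet, fb e = F e) ∧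
      ∀ h ∈ G.edgeSet, h ∉ K.edgeSet → (fb h = t ↔ f h = t) := by
  classical
  obtain ⟨Φ, π, hπ, hΦ, hst, hΦK, hΦπ⟩ := lift_steps hKG hK hf hs
  have hG := SimpleGraph.edgeSet_mono hKG
  have htI : t ∈ Finset.Icc 1 t := hft ▸ hf.1 e₀ (hG he₀)
  let τ : Equiv.Perm ℕ := Equiv.swap (π t) t
  have hτ : ∀ j, j ≠ π t → j ≠ t → τ j = j := fun j => Equiv.swap_apply_of_ne_of_ne
  have hτI : ∀ j ∈ Finset.Icc 1 t, τ j ∈ Finset.Icc 1 t := by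
    intro j hj
    by_cases h1 : j = π t
    · rw [h1, Equiv.swap_apply_left]; exact htI
    · by_cases h2 : j = t
      · rw [h2, Equiv.swap_apply_right]; exact hπ t htI
      · rwa [hτ j h1 h2]
  have hprop := glue hK (hΦ.mono hKG) hΦ τ hτI (by
    intro h hh hhK hah e he hae
    have hne : ∀ e' ∈ K.edgeSet, h ≠ e' := fun e' he' h' => hhK (h' ▸ he')
    have h1 : Φ h ≠ π t := by
      rw [hΦπ h hh hhK, ← hft]
      exact fun h' => hf.2 _ hh _ (hG he₀) (hne _ he₀) ⟨a, hah, hae₀⟩ (π.injective h')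
    have h2 : Φ h ≠ t := by
      rw [← hFt, ← hΦK e₁ he₁]
      exact hΦ.2 _ hh _ (hG he₁) (hne _ he₁) ⟨a, hah, hae₁⟩
    rw [hτ _ h1 h2]
    exact hΦ.2 _ hh _ (hG he) (hne _ he) ⟨a, hah, hae⟩)
  refine ⟨_, hprop, hst.tail ⟨hprop, {π t, t}, Finset.card_le_two.trans hn, ?_, ?_⟩,
    fun e he => by simp only [if_pos he]; exact hΦK e he, fun h hh hhK => ?_⟩
  · intro j hj
    simp only [Finset.mem_insert, Finset.mem_singleton] at hj
    rcases hj with rfl | rfl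
    · exact hπ t htI
    · exact htI
  · intro h _ hd
    by_cases hhK : h ∈ K.edgeSet
    · simp only [if_pos hhK] at hd; exact absurd rfl hd
    · simp only [if_neg hhK] at hd ⊢
      have h3 : Φ h = π t ∨ Φ h = t := by
        by_contra! hc
        exact hd (hτ _ hc.1 hc.2).symm
      rcases h3 with h3 | h3 <;> simp [τ, h3]
  · simp only [if_neg hhK, hΦπ h hh hhK]
    rw [← π.injective.eq_iff (a := f h), ← τ.injective.eq_iff (b := π t)]
    simp [τ]

/-! ### The cutvertex and the cycle -/

/-- The component `X` of `G - a` containing `y` is not everything when `a` is a cutvertex, and some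
neighbor of `a` lies outside it. -/
lemma exists_side {G : SimpleGraph V} {a y : V} (ha : IsCutVertex G a) (hy : y ≠ a) :
    ∃ X : Set V, y ∈ X ∧ a ∉ X ∧ (∀ u ∈ X, ∀ w, G.Adj u w → w ∈ X ∨ w = a) ∧
      ∃ z, G.Adj a z ∧ z ∉ X := by
  classical
  obtain ⟨b, c, hb, hc, ⟨w₀⟩, hsep⟩ := ha
  let X : Set V := {w | ∃ p : G.Walk y w, a ∉ p.support}
  have haX : a ∉ X := fun ⟨p, hp⟩ => hp p.end_mem_support
  have hcl : ∀ u ∈ X, ∀ w, G.Adj u w → w ∈ X ∨ w = a := by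
    rintro u ⟨p, hp⟩ w huw
    by_cases hwa : w = a
    · exact Or.inr hwa
    · refine Or.inl ⟨p.concat huw, ?_⟩
      simp only [Walk.support_concat, List.mem_append,
        List.mem_singleton, not_or]
      exact ⟨hp, fun h => hwa h.symm⟩
  refine ⟨X, ⟨Walk.nil, by simpa using hy.symm⟩, haX, hcl, ?_⟩
  have key : ∀ (w v : V) (p : G.Walk w v), v = a → w ∉ X → w ≠ a → ∃ z, G.Adj a z ∧ z ∉ X := by
    intro w v p hv
    induction p with
    | nil => exact fun _ h => absurd hv h
    | @cons w w' _ hadj p ih =>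
      intro hw hwa
      by_cases hw' : w' = a
      · exact ⟨w, hw' ▸ hadj.symm, hw⟩
      · exact ih hv (fun h => (hcl w' h w hadj.symm).elim hw hwa) hw'
  have haw : a ∈ w₀.support := hsep w₀
  by_cases hbX : b ∈ X
  · by_cases hcX : c ∈ X
    · obtain ⟨p, hp⟩ := hbX
      obtain ⟨r, hr⟩ := hcX
      have := hsep (p.reverse.append r)
      rw [Walk.mem_support_append_iff, Walk.support_reverse, List.mem_reverse] at this
      exact absurd this (by tauto)
    · exact key c a (w₀.dropUntil a haw).reverse rfl hcX hc
  · exact key b a (w₀.takeUntil a haw) rfl hbX hb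

lemma mem_diffGraph {G : SimpleGraph V} {t : ℕ} {f g : Sym2 V → ℕ} {e : Sym2 V}
    (he : e ∈ (diffGraph G t f g).edgeSet) :
    e ∈ G.edgeSet ∧ ((f e = t ∧ g e ≠ t) ∨ (g e = t ∧ f e ≠ t)) := by
  simp only [diffGraph, SimpleGraph.edgeSet_fromEdgeSet, Set.mem_sdiff, Set.mem_symmDiff,
    colorClass, Set.mem_ofPred_eq] at he
  tauto

/-- Distinct adjacent edges of `G(f,g,t)` alternate between `M(f,t)` and `M(g,t)`. -/
lemma diffGraph_alternate {G : SimpleGraph V} {t : ℕ} {f g : Sym2 V → ℕ}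
    (hf : IsProperEdgeColoring G t f) (hg : IsProperEdgeColoring G t g) {e₁ e₂ : Sym2 V}
    (h₁ : e₁ ∈ (diffGraph G t f g).edgeSet) (h₂ : e₂ ∈ (diffGraph G t f g).edgeSet)
    (hne : e₁ ≠ e₂) {x : V} (hx₁ : x ∈ e₁) (hx₂ : x ∈ e₂) : f e₂ = t ↔ ¬ f e₁ = t := by
  obtain ⟨hG₁, h₁⟩ := mem_diffGraph h₁
  obtain ⟨hG₂, h₂⟩ := mem_diffGraph h₂
  have h3 := hf.2 _ hG₁ _ hG₂ hne ⟨x, hx₁, hx₂⟩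
  have h4 := hg.2 _ hG₁ _ hG₂ hne ⟨x, hx₁, hx₂⟩
  omega

/-- A cycle, read off as a sequence of vertices starting at one of its vertices. -/
lemma exists_seq {D : SimpleGraph V} {a : V} (c : D.Walk a a) (hc : c.IsCycle) :
    3 ≤ c.length ∧ c.getVert 0 = a ∧ c.getVert c.length = a ∧
      (∀ i < c.length, D.Adj (c.getVert i) (c.getVert (i + 1))) ∧
      (∀ i < c.length, ∀ j < c.length, ed c.getVert i = ed c.getVert j → i = j) ∧
      ∀ i, 0 < i → i < c.length → c.getVert i ≠ a := by
  refine ⟨hc.three_le_length, c.getVert_zero, c.getVert_length,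
    fun i hi => c.adj_getVert_succ hi, fun i hi j hj hij => ?_, fun i h0 hi h => ?_⟩
  · have hi' : i < c.edges.length := by simpa using hi
    have hj' : j < c.edges.length := by simpa using hj
    exact (hc.isTrail.edges_nodup.getElem_inj_iff (hi := hi') (hj := hj')).1
      (by rw [Walk.getElem_edges, Walk.getElem_edges]; exact hij)
  · rw [hc.getVert_endpoint_iff hi.le] at h
    omega

/-- The cycle of `G(f,g,t)` through `a` can be rotated and oriented so that it starts at `a` with
an edge colored `t` by `f`. -/
lemma exists_oriented {G : SimpleGraph V} {t : ℕ} {f g : Sym2 V → ℕ}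
    (hf : IsProperEdgeColoring G t f) (hg : IsProperEdgeColoring G t g) {u a : V}
    (c : (diffGraph G t f g).Walk u u) (hc : c.IsCycle) (ha : a ∈ c.support) :
    ∃ c' : (diffGraph G t f g).Walk a a, c'.IsCycle ∧ f (ed c'.getVert 0) = t := by
  classical
  obtain ⟨c₁, hc₁⟩ : ∃ c₁ : (diffGraph G t f g).Walk a a, c₁.IsCycle :=
    ⟨c.rotate a ha, hc.rotate ha⟩
  obtain ⟨h3, h0, hl, hadj, hinj, -⟩ := exists_seq c₁ hc₁
  by_cases hft : f (ed c₁.getVert 0) = t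
  · exact ⟨c₁, hc₁, hft⟩
  · refine ⟨c₁.reverse, hc₁.reverse, ?_⟩
    have h4 : ed c₁.reverse.getVert 0 = ed c₁.getVert (c₁.length - 1) := by
      simp only [ed, Walk.getVert_reverse]
      rw [Sym2.eq_swap]
      congr 3
      omega
    rw [h4]
    refine (diffGraph_alternate hf hg (hadj 0 (by omega)) (hadj (c₁.length - 1) (by omega))
      (fun h => ?_) (x := a) ?_ ?_).2 hft
    · have := hinj 0 (by omega) (c₁.length - 1) (by omega) h
      omega
    · simp only [ed, h0]; exact Sym2.mem_mk_left _ _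
    · simp only [ed]
      rw [show c₁.length - 1 + 1 = c₁.length by omega, hl]; exact Sym2.mem_mk_right _ _
/-- Corollary about a cycle component of `G(f,g,t)` containing a cutvertex
of `G`. -/
theorem exists_better_coloring_of_cycle_component_with_cutvertex
    {V : Type*} [Fintype V] (q t : ℕ) (hq : 3 ≤ q) (G : SimpleGraph V)
    (hA : MemA q G) (ht : maxDeg G = t) (htq : q + 2 ≤ t)
    (f g : Sym2 V → ℕ)
    (hf : IsProperEdgeColoring G t f) (hg : IsProperEdgeColoring G t g)
    (hne : ∃ e ∈ G.edgeSet, f e ≠ g e)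
    (u : V) (c : (diffGraph G t f g).Walk u u) (hc : c.IsCycle)
    (hcomp : IsComponentWalk c)
    (hcut : ∃ a ∈ c.support, IsCutVertex G a) :
    ∃ fb, IsProperEdgeColoring G t fb ∧ NEquiv G t (q + 1) fb f ∧
      (colorClass G f t ∩ colorClass G g t).ncard <
        (colorClass G fb t ∩ colorClass G g t).ncard := by
  obtain ⟨a, hac, hacut⟩ := hcut
  obtain ⟨c', hc', hft⟩ := exists_oriented hf hg c hc hac
  obtain ⟨h3, h0, hl, hadj, hinj, hxa⟩ := exists_seq c' hc'
  generalize hn : c'.length = n at h3 hl hadj hinj hxa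
  generalize hxd : c'.getVert = x at h0 hl hadj hinj hxa hft
  have hD : ∀ i < n, ed x i ∈ (diffGraph G t f g).edgeSet := fun i hi => hadj i hi
  have hGe : ∀ i < n, ed x i ∈ G.edgeSet := fun i hi => (mem_diffGraph (hD i hi)).1
  -- The edges of the cycle alternate between `M(f,t)` and `M(g,t)`, so its length is even.
  have hpar : ∀ i < n, (f (ed x i) = t ↔ Even i) := by
    intro i
    induction i with
    | zero => simp [hft]
    | succ i ih =>
      intro hi
      rw [Nat.even_add_one, ← ih (by omega)]
      refine diffGraph_alternate hf hg (hD i (by omega)) (hD (i + 1) hi) (fun h => ?_)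
        (Sym2.mem_mk_right _ _) (Sym2.mem_mk_left _ _)
      have := hinj i (by omega) (i + 1) hi h
      omega
  have hge : ∀ i < n, ¬ Even i → g (ed x i) = t := by
    intro i hi he
    have h1 := (hpar i hi).not.2 he
    have h2 := (mem_diffGraph (hD i hi)).2
    tauto
  have ha0 : a ∈ ed x 0 := by simp [ed, h0]
  have han : a ∈ ed x (n - 1) := by
    simp only [ed]
    rw [show n - 1 + 1 = n by omega, hl]
    exact Sym2.mem_mk_right _ _
  have hodd : ¬ Even (n - 1) := by
    rw [← hpar (n - 1) (by omega)]
    refine (diffGraph_alternate hf hg (hD (n - 1) (by omega)) (hD 0 (by omega)) (fun h => ?_)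
      han ha0).1 hft
    have := hinj (n - 1) (by omega) 0 (by omega) h
    omega
  have hneven : Even n := by
    have := Nat.even_add_one.2 hodd
    rwa [show n - 1 + 1 = n by omega] at this
  -- `K` is the side of the cutvertex containing the cycle.
  obtain ⟨X, h1X, haX, hX, z, haz, hzX⟩ := exists_side hacut (hxa 1 (by omega) (by omega))
  have hxX : ∀ i, 0 < i → i < n → x i ∈ X := by
    intro i h0
    induction i, h0 using Nat.le_induction with
    | base => exact fun _ => h1X
    | succ i hi ih =>
      intro hi'
      exact (hX _ (ih (by omega)) _ (hGe i (by omega))).resolve_right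
        (hxa (i + 1) (by omega) hi')
  have hKe : ∀ i < n, ed x i ∈ (sideGraph G X).edgeSet := by
    intro i hi
    refine mem_sideGraph.2 ⟨hGe i hi, ?_⟩
    rcases Nat.eq_zero_or_pos i with rfl | hi0
    · exact ⟨x 1, Sym2.mem_mk_right _ _, h1X⟩
    · exact ⟨x i, Sym2.mem_mk_left _ _, hxX i hi0 hi⟩
  have hKG := sideGraph_le G X
  have hazK : s(a, z) ∉ (sideGraph G X).edgeSet := by
    intro h
    obtain ⟨-, w, hw, hwX⟩ := mem_sideGraph.1 h
    rcases Sym2.mem_iff.1 hw with rfl | rfl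
    · exact haX hwX
    · exact hzX hwX
  have hmiss : ∀ e ∈ (sideGraph G X).edgeSet, a ∈ e → f e ≠ f s(a, z) := fun e he hae h =>
    hazK (proper_inj hf (SimpleGraph.edgeSet_mono hKG he) haz hae (Sym2.mem_mk_left _ _) h ▸ he)
  obtain ⟨F, hsteps, hF, hFc, hFo⟩ := exists_shift (q := q) (t := t) (n := n) (by omega)
    (by omega) (fun H hH => hA H (hH.trans hKG)) (hf.mono hKG) (hg.mono hKG) (x := x) (by omega)
    hneven (hl.trans h0.symm) (fun i hi => hKe i hi) hinj (fun i hi => (hpar i hi).2) hge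
    (m := f s(a, z)) (hf.1 _ haz)
    (fun h => hmiss _ (hKe 0 (by omega)) ha0 (hft.trans h.symm)) (h0 ▸ hmiss)
  obtain ⟨fb, hfb, hst, hfbK, hfbo⟩ := extend_steps hKG (attachedAt_sideGraph hX)
    (n := q + 1) (by omega) hf hsteps (hKe 0 (by omega)) ha0 hft (hKe (n - 1) (by omega)) han
    ((hFc (n - 1) (by omega)).2 hodd)
  refine ⟨fb, hfb, nequiv_of_steps hf hst, Set.ncard_lt_ncard ?_ (Set.toFinite _)⟩
  -- Common edges are not on the cycle, while the edge of index `1` is gained.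
  rw [Set.ssubset_iff_of_subset]
  · have he1 : ¬ Even 1 := by decide
    refine ⟨ed x 1, ⟨⟨hGe 1 (by omega), ?_⟩, hGe 1 (by omega), hge 1 (by omega) he1⟩, ?_⟩
    · rw [hfbK _ (hKe 1 (by omega))]
      exact (hFc 1 (by omega)).2 he1
    · exact fun h => he1 ((hpar 1 (by omega)).1 h.1.2)
  · rintro e ⟨⟨heG, hef⟩, -, heg⟩
    refine ⟨⟨heG, ?_⟩, heG, heg⟩
    by_cases heK : e ∈ (sideGraph G X).edgeSet
    · rw [hfbK e heK]
      refine (hFo e heK ?_).2 hef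
      rintro i hi rfl
      have := (mem_diffGraph (hD i hi)).2
      tauto
    · exact (hfbo e heG heK).2 hef


end EdgeTrans
end

section
/- Let B be a non-regular 2-connected graph equipped with a proper t-edge-coloring, where t = Δ(B). If C is a cycle of B all of whose vertices have degree t in B, then there is a t-alternating (ear, C)-subgraph H = P_0 ∪ … ∪ P_n of B with P_0 = C and n ≥ 0, such that either (i) H contains a vertex x of degree less than t in B, or (ii) there is a t-alternating path P_{n+1} from a vertex y of H to a vertex x of degree less than t in B, such that y is the only common vertex of P_{n+1} and H, and P_{n+1} contains the edge colored t incident with x, if such an edge exists. -/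
/-!
The proof takes an ear subgraph `H` with as many vertices as possible and shows that
(i) it contains a vertex of degree less than `t`, or (ii) an alternating path from it to such a
vertex exists.

Every vertex of `H` is incident with an edge of `H` colored `t` (`cycle_sat`, `AltTrail.sat_sup`):
on `C` this is alternation, and an internal vertex of a `(c, t)`-colored ear lies on an edge of
each of its two colors. Hence, by properness, an edge with exactly one end in `H` is never
colored `t`.

Suppose that (i) fails. Some vertex has degree less than `t`, so it lies outside `H`, and by
connectedness there is an edge `yz` with `y ∈ H`, `z ∉ H`; let `c ≠ t` be its color. Follow the
`(c, t)`-alternating path that starts with `yz` for as long as it stays outside `H`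
(`exists_ear_or_lowdeg_path`), and let `b` be its last vertex. If `b` misses one of the
colors `c`, `t`, then `deg b < t` and the path is as required in (ii): either its last edge is the
edge colored `t` at `b`, or there is no such edge. Otherwise the path continues with an edge `bw`.
By properness `w` is not on the path, so, the path being maximal, `w ∈ H`. Then `bw` is not
colored `t`, the extended path is a `(c, t)`-colored ear of `H` through the new vertex `z`, and
adding it to `H` contradicts the choice of `H`.
-/

open SimpleGraph Set

namespace EdgeTrans

universe u v

variable {V : Type*} {W : Type*}

/-! ### Colors at a vertex -/

lemma color_inj {B : SimpleGraph V} {t : ℕ} {f : Sym2 V → ℕ} (hf : IsProperEdgeColoring B t f)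
    {e₁ e₂ : Sym2 V} (h₁ : e₁ ∈ B.edgeSet) (h₂ : e₂ ∈ B.edgeSet) {x : V} (hx₁ : x ∈ e₁)
    (hx₂ : x ∈ e₂) (h : f e₁ = f e₂) : e₁ = e₂ := by
  by_contra hne
  exact hf.2 e₁ h₁ e₂ h₂ hne ⟨x, hx₁, hx₂⟩ h

/-- A vertex at which one of the `t` colors is missing has degree less than `t`. -/
lemma deg_lt_of_missing [Finite V] {B : SimpleGraph V} {t : ℕ} {f : Sym2 V → ℕ}
    (hf : IsProperEdgeColoring B t f) {b : V} {d : ℕ} (hd : d ∈ Finset.Icc 1 t)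
    (hmiss : ∀ w, B.Adj b w → f s(b, w) ≠ d) : deg B b < t := by
  have h1 : (B.neighborSet b).ncard ≤ (((Finset.Icc 1 t).erase d : Finset ℕ) : Set ℕ).ncard := by
    apply Set.ncard_le_ncard_of_injOn (fun w => f s(b, w))
    · intro w hw
      have hw' : B.Adj b w := hw
      simp only [Finset.coe_erase, Set.mem_sdiff, Set.mem_singleton_iff, Finset.mem_coe]
      exact ⟨hf.1 _ hw', hmiss w hw'⟩
    · intro w hw w' hw' h
      have h2 := color_inj hf (e₁ := s(b, w)) (e₂ := s(b, w')) hw hw' (x := b) (by simp)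
        (by simp) h
      exact Sym2.congr_right.mp h2
  rw [Set.ncard_coe_finset, Finset.card_erase_of_mem hd, Nat.card_Icc] at h1
  have := (Finset.mem_Icc.mp hd)
  unfold deg
  omega

/-- `H` is saturated by the color `t`: every vertex of `H` lies on an edge of `H` colored `t`. -/
def Sat {B : SimpleGraph V} (f : Sym2 V → ℕ) (t : ℕ) (H : B.Subgraph) : Prop :=
  ∀ a ∈ H.verts, ∃ b, H.Adj a b ∧ f s(a, b) = t

/-- An edge colored `t` with one end in a saturated `H` has both ends in `H`. -/
lemma Sat.mem {B : SimpleGraph V} {f : Sym2 V → ℕ} {t : ℕ} {H : B.Subgraph}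
    (hs : Sat f t H) (hf : IsProperEdgeColoring B t f) {a b : V} (ha : a ∈ H.verts)
    (hab : B.Adj a b) (hc : f s(a, b) = t) : b ∈ H.verts := by
  obtain ⟨b', hb', hc'⟩ := hs a ha
  have h2 := color_inj hf (e₁ := s(a, b)) (e₂ := s(a, b')) hab (H.adj_sub hb') (x := a)
    (by simp) (by simp) (hc.trans hc'.symm)
  rw [Sym2.congr_right.mp h2]
  exact hb'.snd_mem

lemma getElem_edges {B : SimpleGraph V} {u v : V} (p : B.Walk u v) (i : ℕ)
    (h : i < p.edges.length) : p.edges[i] = s(p.getVert i, p.getVert (i + 1)) := by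
  have hi : i < p.length := by simpa using h
  have hd : i < p.darts.length := by simpa using hi
  rw [Walk.getElem_edges_eq_edge_getElem_darts, Walk.darts_getElem_eq_getVert i hd]
  rfl

lemma cycle_sat {B : SimpleGraph V} {f : Sym2 V → ℕ} {t : ℕ} {v₀ : V} {c : B.Walk v₀ v₀}
    (hc : c.IsCycle) (halt : IsAltCycle f t c) : Sat f t c.toSubgraph := by
  have hlen : 3 ≤ c.edges.length := by simpa using hc.three_le_length
  have key : ∀ a ∈ c.support, ∃ e ∈ c.edges, a ∈ e ∧ f e = t := by
    intro a ha
    obtain ⟨i, rfl, hi⟩ := Walk.mem_support_iff_exists_getVert.mp ha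
    obtain ⟨j, hj, hja⟩ : ∃ j, j < c.edges.length ∧ c.getVert (j + 1) = c.getVert i := by
      rcases Nat.eq_zero_or_pos i with rfl | hpos
      · refine ⟨c.edges.length - 1, by omega, ?_⟩
        rw [Nat.sub_add_cancel (by omega)]
        simp
      · refine ⟨i - 1, ?_, ?_⟩
        · rw [Walk.length_edges]; omega
        · rw [Nat.sub_add_cancel hpos]
    rw [← hja]
    have hm : (j + 1) % c.edges.length < c.edges.length := Nat.mod_lt _ (by omega)
    rcases halt ⟨j, hj⟩ with h | h
    · refine ⟨c.edges[j], List.getElem_mem _, ?_, by simpa using h⟩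
      rw [getElem_edges]; simp
    · refine ⟨c.edges[(j + 1) % c.edges.length], List.getElem_mem _, ?_, by simpa using h⟩
      rw [getElem_edges]
      rcases (show j + 1 < c.edges.length ∨ j + 1 = c.edges.length by omega) with h' | h'
      · rw [Nat.mod_eq_of_lt h']; simp
      · have hz : (j + 1) % c.edges.length = 0 := by rw [h']; simp
        rw [hz, h']
        simp
  intro a ha
  obtain ⟨e, he, hae, hfe⟩ := key a (by simpa using ha)
  obtain ⟨b, rfl⟩ := hae
  exact ⟨b, Walk.adj_toSubgraph_iff_mem_edges.mpr he, hfe⟩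

/-! ### Growing an alternating path -/

/-- The color of the `i`-th edge of a path with colors `c, t, c, t, …`. -/
def col (c t i : ℕ) : ℕ := if Even i then c else t

lemma col_mem (c t i : ℕ) : col c t i = c ∨ col c t i = t := by
  unfold col; split_ifs <;> simp

lemma col_cases {c t i d : ℕ} (hi : 1 ≤ i) (h : d = c ∨ d = t) :
    d = col c t (i - 1) ∨ d = col c t i := by
  obtain ⟨k, rfl⟩ := Nat.exists_eq_add_of_le' hi
  simp only [col, Nat.add_sub_cancel, Nat.even_add_one]
  split_ifs <;> tauto

lemma col_ne {c t i : ℕ} (hi : 1 ≤ i) (h : c ≠ t) : col c t (i - 1) ≠ col c t i := by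
  obtain ⟨k, rfl⟩ := Nat.exists_eq_add_of_le' hi
  simp only [col, Nat.add_sub_cancel, Nat.even_add_one]
  split_ifs <;> first | exact h | exact h.symm

/-- `p` is a path with at least one edge and with colors `c, t, c, t, …`. The last four fields
record which colors occur along `p` at each of its vertices; they follow from the first three. -/
structure AltTrail {B : SimpleGraph V} (f : Sym2 V → ℕ) (c t : ℕ) {y b : V} (p : B.Walk y b) :
    Prop where
  path : p.IsPath
  pos : 1 ≤ p.length
  color : ∀ i (h : i < p.edges.length), f p.edges[i] = col c t i
  inner : ∀ a ∈ p.support, a ≠ y → a ≠ b → ∀ d, d = c ∨ d = t → ∃ e ∈ p.edges, a ∈ e ∧ f e = d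
  start : ∃ e ∈ p.edges, y ∈ e ∧ f e = c
  last : ∃ e ∈ p.edges, b ∈ e ∧ f e = col c t (p.length - 1)
  last_only : ∀ e ∈ p.edges, b ∈ e → f e = col c t (p.length - 1)

lemma AltTrail.ne {B : SimpleGraph V} {f : Sym2 V → ℕ} {c t : ℕ} {y b : V} {p : B.Walk y b}
    (h : AltTrail f c t p) : b ≠ y := by
  rintro rfl
  have := h.pos
  rw [Walk.isPath_iff_nil.mp h.path |>.eq_nil] at this
  simp at this

lemma AltTrail.single {B : SimpleGraph V} {f : Sym2 V → ℕ} {c t : ℕ} {y z : V} (h : B.Adj y z)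
    (hc : f s(y, z) = c) : AltTrail f c t (Walk.cons h Walk.nil) where
  path := by simp [h.ne]
  pos := by simp
  color := by
    intro i hi
    have : i = 0 := by simpa using hi
    subst this
    simpa [col] using hc
  inner := by
    intro a ha h1 h2
    simp at ha
    tauto
  start := ⟨s(y, z), by simp, by simp, hc⟩
  last := ⟨s(y, z), by simp, by simp, by simpa [col] using hc⟩
  last_only := by
    intro e he _
    simp at he
    subst he
    simpa [col] using hc

lemma AltTrail.concat {B : SimpleGraph V} {f : Sym2 V → ℕ} {c t : ℕ} {y b w : V}
    {p : B.Walk y b} (h : AltTrail f c t p) (hbw : B.Adj b w) (hw : w ∉ p.support)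
    (hc : f s(b, w) = col c t p.length) : AltTrail f c t (p.concat hbw) where
  path := h.path.concat hw hbw
  pos := by simp
  color := by
    intro i hi
    simp only [Walk.edges_concat, List.concat_eq_append] at hi ⊢
    rw [List.getElem_append]
    split_ifs with h'
    · exact h.color i h'
    · have : i = p.length := by simp at hi h'; omega
      subst this
      simpa using hc
  inner := by
    intro a ha hay haw d hd
    rw [Walk.support_concat] at ha
    simp only [Walk.edges_concat, List.concat_eq_append, List.mem_append, List.mem_singleton]
    have ha' : a ∈ p.support := by simpa [haw] using ha
    by_cases hab : a = b
    · subst hab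
      rcases col_cases h.pos hd with rfl | rfl
      · obtain ⟨e, he, h1, h2⟩ := h.last
        exact ⟨e, Or.inl he, h1, h2⟩
      · exact ⟨_, Or.inr rfl, by simp, hc⟩
    · obtain ⟨e, he, h1, h2⟩ := h.inner a ha' hay hab d hd
      exact ⟨e, Or.inl he, h1, h2⟩
  start := by
    obtain ⟨e, he, h1, h2⟩ := h.start
    exact ⟨e, by simp [Walk.edges_concat, he], h1, h2⟩
  last := ⟨s(b, w), by simp [Walk.edges_concat], by simp, by simpa using hc⟩
  last_only := by
    intro e he hwe
    simp only [Walk.edges_concat, List.concat_eq_append, List.mem_append,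
      List.mem_singleton] at he
    rcases he with he | rfl
    · exact absurd (p.mem_support_of_mem_edges he hwe) hw
    · simpa using hc

lemma AltTrail.altPath {B : SimpleGraph V} {f : Sym2 V → ℕ} {c t : ℕ} {y b : V}
    {p : B.Walk y b} (h : AltTrail f c t p) : AltPath f t p := by
  intro i hi
  rcases Nat.even_or_odd i with he | ho
  · right
    have := h.color (i + 1) hi
    simpa [col, Nat.even_add_one, he] using this
  · left
    have := h.color i (by omega)
    simpa [col, Nat.not_even_iff_odd.mpr ho] using this

/-- An edge prolonging an alternating path in the expected color does not return to the path,
provided the start of the path lies in a saturated `H` that the path does not meet again. -/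
lemma AltTrail.next_notMem {B : SimpleGraph V} {f : Sym2 V → ℕ} {c t : ℕ} {y b w : V}
    {p : B.Walk y b} (h : AltTrail f c t p) (hf : IsProperEdgeColoring B t f) (hct : c ≠ t)
    {H : B.Subgraph} (hs : Sat f t H) (hy : y ∈ H.verts) (hb : b ∉ H.verts)
    (hbw : B.Adj b w) (hc : f s(b, w) = col c t p.length) : w ∉ p.support := by
  intro hw
  obtain ⟨e, he, hwe, hfe⟩ : ∃ e ∈ p.edges, w ∈ e ∧ f e = col c t p.length := by
    by_cases hwy : w = y
    · subst hwy
      rcases col_mem c t p.length with h1 | h1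
      · rw [h1]; exact h.start
      · exact absurd (hs.mem hf hy hbw.symm (by rw [Sym2.eq_swap, hc, h1])) hb
    · exact h.inner w hw hwy hbw.ne' _ (col_mem _ _ _)
  have heq := color_inj hf (p.edges_subset_edgeSet he) (show s(b, w) ∈ B.edgeSet from hbw) hwe
    (by simp) (hfe.trans hc.symm)
  have h3 := h.last_only e he (by rw [heq]; simp)
  exact col_ne h.pos hct (h3.symm.trans hfe)

/-! ### Ears -/

/-- `q` is a `(c, t)`-colored ear of `H ∪ q` for some color `c ≤ t - 1`. -/
def IsEarStep {B : SimpleGraph V} (f : Sym2 V → ℕ) (t : ℕ) (H : B.Subgraph) {x y : V}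
    (q : B.Walk x y) : Prop :=
  q.IsPath ∧ 1 ≤ q.length ∧ (∃ ci : ℕ, ci ≤ t - 1 ∧ AltColored f ci t q) ∧
    x ∈ H.verts ∧ y ∈ H.verts ∧
    ∀ a ∈ q.support, a ≠ x → a ≠ y → ((H ⊔ q.toSubgraph).neighborSet a).ncard = 2

lemma AltTrail.isEarStep {B : SimpleGraph V} {f : Sym2 V → ℕ} {c t : ℕ} {y w : V}
    {q : B.Walk y w} (h : AltTrail f c t q) (hct : c ≤ t - 1) {H : B.Subgraph}
    (hy : y ∈ H.verts) (hw : w ∈ H.verts)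
    (hout : ∀ a ∈ q.support, a ∈ H.verts → a = y ∨ a = w) : IsEarStep f t H q := by
  refine ⟨h.path, h.pos, ⟨c, hct, Or.inl ?_⟩, hy, hw, ?_⟩
  · intro i
    exact h.color i.1 i.2
  · intro a ha hay haw
    have haH : a ∉ H.verts := fun h' => by
      rcases hout a ha h' with h'' | h''
      · exact hay h''
      · exact haw h''
    have hn : H.neighborSet a = ∅ := by
      ext b
      simp only [Subgraph.mem_neighborSet, Set.mem_empty_iff_false, iff_false]
      exact fun hb => haH hb.fst_mem
    rw [Subgraph.neighborSet_sup, hn, Set.empty_union]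
    obtain ⟨i, rfl, hi⟩ := Walk.mem_support_iff_exists_getVert.mp ha
    apply h.path.ncard_neighborSet_toSubgraph_internal_eq_two
    · rintro rfl
      simp at hay
    · rcases hi.lt_or_eq with h' | rfl
      · exact h'
      · simp at haw

lemma AltTrail.sat_sup {B : SimpleGraph V} {f : Sym2 V → ℕ} {c t : ℕ} {y w : V}
    {q : B.Walk y w} (h : AltTrail f c t q) {H : B.Subgraph} (hs : Sat f t H)
    (hy : y ∈ H.verts) (hw : w ∈ H.verts) : Sat f t (H ⊔ q.toSubgraph) := by
  intro a ha
  by_cases haH : a ∈ H.verts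
  · obtain ⟨b, hb, hfb⟩ := hs a haH
    exact ⟨b, Subgraph.sup_adj.mpr (Or.inl hb), hfb⟩
  · have ha' : a ∈ q.support := by
      simpa [haH] using ha
    obtain ⟨e, he, hae, hfe⟩ := h.inner a ha' (fun h' => haH (h' ▸ hy))
      (fun h' => haH (h' ▸ hw)) t (Or.inr rfl)
    obtain ⟨b, rfl⟩ := hae
    exact ⟨b, Subgraph.sup_adj.mpr (Or.inr (Walk.adj_toSubgraph_iff_mem_edges.mpr he)), hfe⟩

/-- The alternating path leaving a saturated `H` through an edge `yz` either returns to `H`,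
forming an ear through `z`, or ends outside `H` at a vertex of degree less than `t`. -/
lemma exists_ear_or_lowdeg_path [Fintype V] {B : SimpleGraph V} {f : Sym2 V → ℕ} {t : ℕ}
    (hf : IsProperEdgeColoring B t f) {H : B.Subgraph} (hs : Sat f t H) {y z : V}
    (hy : y ∈ H.verts) (hz : z ∉ H.verts) (hyz : B.Adj y z) :
    (∃ (w : V) (q : B.Walk y w), IsEarStep f t H q ∧ Sat f t (H ⊔ q.toSubgraph) ∧
      z ∈ q.support) ∨
    (∃ (b : V) (p : B.Walk y b), p.IsPath ∧ AltPath f t p ∧ 1 ≤ p.length ∧ deg B b < t ∧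
      (∀ w ∈ p.support, w ∈ H.verts → w = y) ∧
      ∀ e ∈ B.edgeSet, b ∈ e → f e = t → e ∈ p.edges) := by
  classical
  obtain ⟨c, hc⟩ : ∃ c, f s(y, z) = c := ⟨_, rfl⟩
  have hct : c ≠ t := fun h => hz (hs.mem hf hy hyz (hc.trans h))
  have hcI : c ∈ Finset.Icc 1 t := hc ▸ hf.1 _ hyz
  have hcI' := Finset.mem_Icc.mp hcI
  have hcolI : ∀ i, col c t i ∈ Finset.Icc 1 t := by
    intro i
    rcases col_mem c t i with h | h <;> rw [h]
    · exact hcI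
    · exact Finset.mem_Icc.mpr ⟨hcI'.1.trans hcI'.2, le_rfl⟩
  let Q : ℕ → Prop := fun l => ∃ (b : V) (p : B.Walk y b), AltTrail f c t p ∧ z ∈ p.support ∧
    (∀ w ∈ p.support, w ∈ H.verts → w = y) ∧ p.length = l
  have hQ1 : Q 1 := by
    refine ⟨z, Walk.cons hyz Walk.nil, AltTrail.single hyz hc, by simp, ?_, by simp⟩
    intro w hw hwH
    simp only [Walk.support_cons, Walk.support_nil, List.mem_cons, List.not_mem_nil,
      or_false] at hw
    rcases hw with rfl | rfl
    · rfl
    · exact absurd hwH hz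
  have hbound : ∀ l, Q l → l ≤ Fintype.card V := by
    rintro l ⟨b, p, hp, -, -, rfl⟩
    exact hp.path.length_lt.le
  have hQm : Q (Nat.findGreatest Q (Fintype.card V)) := Nat.findGreatest_spec (hbound 1 hQ1) hQ1
  obtain ⟨b, p, hp, hzp, hout, hlen⟩ := hQm
  have hb : b ∉ H.verts := fun h => hp.ne (hout b p.end_mem_support h)
  by_cases hmiss : ∀ w, B.Adj b w → f s(b, w) ≠ col c t p.length
  · right
    refine ⟨b, p, hp.path, hp.altPath, hp.pos, deg_lt_of_missing hf (hcolI _) hmiss, hout, ?_⟩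
    intro e he hbe hfe
    rcases col_cases (c := c) hp.pos (Or.inr hfe) with h | h
    · obtain ⟨e', he', hbe', hfe'⟩ := hp.last
      rw [color_inj hf he (p.edges_subset_edgeSet he') hbe hbe' (h.trans hfe'.symm)]
      exact he'
    · obtain ⟨w, rfl⟩ := hbe
      exact absurd h (hmiss w he)
  · left
    push Not at hmiss
    obtain ⟨w, hbw, hfw⟩ := hmiss
    have hw : w ∉ p.support := hp.next_notMem hf hct hs hy hb hbw hfw
    have hp' := hp.concat hbw hw hfw
    have hzp' : z ∈ (p.concat hbw).support := by
      rw [Walk.support_concat]; simp [hzp]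
    by_cases hwH : w ∈ H.verts
    · refine ⟨w, p.concat hbw, hp'.isEarStep (by omega) hy hwH ?_, AltTrail.sat_sup hp' hs hy hwH,
        hzp'⟩
      intro a ha haH
      rw [Walk.support_concat] at ha
      simp only [List.mem_append, List.mem_singleton] at ha
      rcases ha with ha | ha
      · exact Or.inl (hout a ha haH)
      · exact Or.inr ha
    · exfalso
      have hQ : Q (p.length + 1) := by
        refine ⟨w, p.concat hbw, hp', hzp', ?_, by simp⟩
        intro a ha haH
        rw [Walk.support_concat] at ha
        simp only [List.mem_append, List.mem_singleton] at ha
        rcases ha with ha | rfl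
        · exact hout a ha haH
        · exact absurd haH hwH
      have := Nat.le_findGreatest (hbound _ hQ) hQ
      omega

/-! ### Ear decompositions -/

/-- `pre c L i` is the union of `c` with the first `i` walks of the sequence `L`. Indexing the ears by all of
`ℕ`, with arbitrary values beyond the ones in use, lets an ear be appended by
`Function.update`. -/
def pre {B : SimpleGraph V} {v₀ : V} (c : B.Walk v₀ v₀) (L : ℕ → Σ a b : V, B.Walk a b) :
    ℕ → B.Subgraph
  | 0 => c.toSubgraph
  | i + 1 => pre c L i ⊔ (L i).2.2.toSubgraph

lemma pre_update {B : SimpleGraph V} {v₀ : V} (c : B.Walk v₀ v₀)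
    (L : ℕ → Σ a b : V, B.Walk a b) (n : ℕ) (q : Σ a b : V, B.Walk a b) {i : ℕ} (hi : i ≤ n) :
    pre c (Function.update L n q) i = pre c L i := by
  induction i with
  | zero => rfl
  | succ k ih =>
    simp only [pre]
    rw [ih (by omega), Function.update_of_ne (by omega)]

/-- The recursive union `pre` agrees with `earPrefix` for the family of the first `n` walks. -/
lemma earPrefix_eq {B : SimpleGraph V} {v₀ : V} (c : B.Walk v₀ v₀)
    (L : ℕ → Σ a b : V, B.Walk a b) {n i : ℕ} (hi : i ≤ n) :
    earPrefix c (fun j : Fin n => (L j).2.2) i = pre c L i := by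
  induction i with
  | zero => simp [earPrefix, pre]
  | succ k ih =>
    rw [pre, ← ih (by omega)]
    unfold earPrefix
    rw [sup_assoc]
    congr 1
    apply le_antisymm
    · refine iSup_le fun j => iSup_le fun hj => ?_
      rcases Nat.lt_succ_iff_lt_or_eq.mp hj with h | h
      · exact le_sup_of_le_left (le_iSup_of_le j (le_iSup_of_le h le_rfl))
      · subst h
        exact le_sup_right
    · refine sup_le (iSup_le fun j => iSup_le fun hj => ?_) ?_
      · exact le_iSup_of_le j (le_iSup_of_le (by omega) le_rfl)
      · exact le_iSup_of_le ⟨k, by omega⟩ (le_iSup_of_le (Nat.lt_succ_self k) le_rfl)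

/-- In a non-regular 2-connected properly `t`-edge-colored graph `B` with
`t = Δ(B)`, for every `t`-alternating cycle `C` all of whose vertices have degree `t`, there
is a `t`-alternating (ear, `C`)-subgraph `H` that either contains a vertex of degree less
than `t`, or admits a `t`-alternating path from a vertex `y` of `H` (meeting `H` only in `y`)
to a vertex `x` of degree less than `t`, containing the edge of color `t` at `x` if it
exists. -/
theorem exists_alternating_ear_subgraph
    {V : Type*} [Fintype V] (B : SimpleGraph V) (t : ℕ)
    (hnonreg : ∃ u w : V, deg B u ≠ deg B w) (h2c : TwoConnected B)
    (f : Sym2 V → ℕ) (hf : IsProperEdgeColoring B t f) (ht : t = maxDeg B)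
    (v₀ : V) (c : B.Walk v₀ v₀) (hc : c.IsCycle) (halt : IsAltCycle f t c)
    (hdegC : ∀ a ∈ c.support, deg B a = t) :
    ∃ (n : ℕ) (x y : Fin n → V) (P : ∀ i : Fin n, B.Walk (x i) (y i)),
      IsEarDecomp B f t c n x y P ∧
      ((∃ z ∈ (earPrefix c P n).verts, deg B z < t) ∨
        (∃ (a b : V) (p : B.Walk a b), p.IsPath ∧ AltPath f t p ∧ 1 ≤ p.length ∧
          a ∈ (earPrefix c P n).verts ∧ deg B b < t ∧
          (∀ w ∈ p.support, w ∈ (earPrefix c P n).verts → w = a) ∧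
          ∀ e ∈ B.edgeSet, b ∈ e → f e = t → e ∈ p.edges)) := by
  have hlow : ∃ u, deg B u < t := by
    have hle : ∀ u, deg B u ≤ t := fun u =>
      ht ▸ le_ciSup (f := fun x => deg B x) (Set.finite_range _).bddAbove u
    obtain ⟨u, w, huw⟩ := hnonreg
    by_contra! h
    exact huw ((le_antisymm (hle u) (h u)).trans (le_antisymm (hle w) (h w)).symm)
  -- Induction on the number of vertices outside the current ear subgraph.
  have main : ∀ (k n : ℕ) (L : ℕ → Σ a b : V, B.Walk a b),
      (∀ i < n, IsEarStep f t (pre c L i) (L i).2.2) → Sat f t (pre c L n) →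
      (pre c L n).vertsᶜ.ncard ≤ k → v₀ ∈ (pre c L n).verts →
      ∃ (n : ℕ) (L : ℕ → Σ a b : V, B.Walk a b),
        (∀ i < n, IsEarStep f t (pre c L i) (L i).2.2) ∧
        ((∃ z ∈ (pre c L n).verts, deg B z < t) ∨
          (∃ (a b : V) (p : B.Walk a b), p.IsPath ∧ AltPath f t p ∧ 1 ≤ p.length ∧
            a ∈ (pre c L n).verts ∧ deg B b < t ∧
            (∀ w ∈ p.support, w ∈ (pre c L n).verts → w = a) ∧
            ∀ e ∈ B.edgeSet, b ∈ e → f e = t → e ∈ p.edges)) := by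
    intro k
    induction k with
    | zero =>
      intro n L hL _ hk _
      obtain ⟨u, hu⟩ := hlow
      refine ⟨n, L, hL, Or.inl ⟨u, ?_, hu⟩⟩
      by_contra hmem
      have h0 := (Set.ncard_eq_zero (Set.toFinite _)).mp (Nat.le_zero.mp hk)
      exact Set.notMem_empty u (h0 ▸ hmem)
    | succ k ih =>
      intro n L hL hs hk hv
      obtain ⟨u, hu⟩ := hlow
      by_cases huH : u ∈ (pre c L n).verts
      · exact ⟨n, L, hL, Or.inl ⟨u, huH, hu⟩⟩
      obtain ⟨p⟩ := h2c.1.preconnected v₀ u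
      obtain ⟨d, -, hd1, hd2⟩ := p.exists_boundary_dart _ hv huH
      rcases exists_ear_or_lowdeg_path hf hs hd1 hd2 d.adj with
        ⟨w, q, hq, hqs, hzq⟩ | ⟨b, p, h1, h2, h3, h4, h5, h6⟩
      · have hpre : pre c (Function.update L n ⟨_, _, q⟩) (n + 1) =
            pre c L n ⊔ q.toSubgraph := by
          rw [pre, pre_update _ _ _ _ le_rfl, Function.update_self]
        refine ih (n + 1) (Function.update L n ⟨_, _, q⟩) ?_ (hpre ▸ hqs) ?_ ?_
        · intro i hi
          rw [pre_update _ _ _ _ (Nat.lt_succ_iff.mp hi)]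
          rcases Nat.lt_succ_iff_lt_or_eq.mp hi with h | rfl
          · rw [Function.update_of_ne h.ne]
            exact hL i h
          · rw [Function.update_self]
            exact hq
        · rw [hpre]
          have hlt : ((pre c L n ⊔ q.toSubgraph).vertsᶜ).ncard < ((pre c L n).vertsᶜ).ncard := by
            apply Set.ncard_lt_ncard _ (Set.toFinite _)
            rw [Set.ssubset_iff_of_subset]
            · exact ⟨d.snd, hd2, fun h => h (by simp [hzq])⟩
            · exact Set.compl_subset_compl.mpr (by simp)
          omega
        · rw [hpre]
          exact Or.inl hv
      · exact ⟨n, L, hL, Or.inr ⟨_, b, p, h1, h2, h3, hd1, h4, h5, h6⟩⟩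
  obtain ⟨n, L, hL, hconc⟩ := main _ 0 (fun _ => ⟨v₀, v₀, Walk.nil⟩) (by simp)
    (cycle_sat hc halt) le_rfl (by simp [pre])
  refine ⟨n, fun i => (L i).1, fun i => (L i).2.1, fun i => (L i).2.2, ⟨hc, halt, ?_⟩, ?_⟩
  · intro i
    rw [earPrefix_eq c L i.2.le, earPrefix_eq c L i.2]
    exact hL i i.2
  · rw [earPrefix_eq c L le_rfl]
    exact hconc

end EdgeTrans
end
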